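/- arXiv:1611.09730 — 2 statements merged into one kernel-verified Lean document; each statement's English description precedes it below -/
import Mathlib

section
/- Let B be a K-algebra with a K-automorphism α such that the skew Laurent polynomial ring B[y^{±1}; α] is simple and its centre equals K. Let t ≥ 0 be an integer and let A = B[c₁,…,c_t] be the polynomial ring over B in t central, algebraically independent, commuting indeterminates, with α extended to A by α(c_i) = c_i for 1 ≤ i ≤ t. Let u be a central element of A, let v = u − α(u), and let R = R(A, α, v, 1) be the corresponding conformal ambiskew polynomial ring with Casimir element z = xy − u. Then: (i) the centre of A[y^{±1}; α] is the polynomial algebra K[c₁,…,c_t] and the centre of R is the polynomial algebra K[z, c₁,…,c_t]; (ii) writing Z for the set of nonzero elements of Z(R) = K[z, c₁,…,c_t], the central localization R_Z of R at Z is a simple ring if and only if, for all m ≥ 1, there exists a nonzero polynomial p_m(X, X₁,…,X_t) ∈ K[X, X₁,…,X_t] in t+1 commuting indeterminates such that p_m(u, c₁,…,c_t) ∈ v^(m)A, where v^(m) = u − α^m(u). -/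
/-!
Write `S = B[y^{±1}; α]`. Since `α` fixes the `c_i`, the ring `A[y^{±1}; α]` is the polynomial ring
`S[c₁,…,c_t]` (`laurent_poly`); comparing coefficients, its centre is `Z(S)[c₁,…,c_t] = K[c₁,…,c_t]`
(`centre_poly`).

The ambiskew ring `R` embeds in `A[y^{±1}; α][X]` by `a ↦ a`, `y ↦ y`, `x ↦ (X + u) y⁻¹`, which sends
the Casimir element `z` to `X` (`ambiskew_embed`). A central element of `R` commutes with `A` and `y`,
hence with `A[y^{±1}; α]`, so it lies in `K[c₁,…,c_t][X]`, the image of `K[z, c₁,…,c_t]`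
(`CasimirEmbedding.central_eq_eval`).

Because `S` is simple, every nonzero `S`-sub-bimodule of `S[c₁,…,c_t][X]` contains a nonzero element
commuting with `S`, by a minimal support argument (`exists_commuting`). Applied to an annihilator this
shows that nonzero central elements of `R` are regular. Applied to the ideal obtained from an
ideal `J` of `R` by inverting `y`, it shows that a nonzero `J` contains a product of a power of `y`
with a nonzero central element. So if `J` is saturated, i.e. contracted from the central
localization, then it contains some `yⁿ` (`CasimirEmbedding.exists_pow_mem`).

If the polynomials `p_m` exist, a saturated `J` containing `yⁿ⁺¹` also contains `yⁿ`
(`CasimirEmbedding.pow_descent`): commuting `x` past `yⁿ⁺¹` gives `v^(n+1) yⁿ ∈ J`, hence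
`p(u, c) yⁿ ∈ J` with `p = p_{n+1}`, and `(z + u) yⁿ = x yⁿ⁺¹ ∈ J` turns this into
`p(-z, c) yⁿ ∈ J`, where `p(-z, c)` is a nonzero central element. So `1 ∈ J` and the localization
is simple.

Conversely, `R` acts on sequences in `A`, with `x` the right shift and `y` the left shift weighted by
`αⁱ(u) - u` (`exists_sequence_rep`). The sequences whose first `m` terms lie in `v^(m) A` form a
submodule, and the elements of `R` mapping every sequence into it form an ideal containing `yᵐ`
(`CasimirEmbedding.exists_ideal`). If the localization is simple, this ideal contains a nonzero central
element `q(z, c)`. As `z` acts on zeroth terms as `-u`, applying it to the constant sequence `1` gives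
`q(-u, c) ∈ v^(m) A`, so `p_m(X₀, …) = q(-X₀, …)` works.
-/

noncomputable section

/-- The "monomial" of degree `i` in a generalized Weyl algebra: `Y^i` for `i ≥ 0`
and `X^(-i)` for `i < 0`. -/
def gwaMon {W : Type*} [Monoid W] (X Y : W) : ℤ → W :=
  fun i => if 0 ≤ i then Y ^ i.toNat else X ^ (-i).toNat

/-- `W` is a generalized Weyl algebra `W(A, α, u)` with respect to the embedding
`ι : A →+* W` and the elements `X, Y`: the defining relations hold and `W` is free as
a left `A`-module with basis `{X^i : i ≥ 1} ∪ {1} ∪ {Y^i : i ≥ 1}`. -/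
structure IsGWA {A W : Type*} [Ring A] [Ring W]
    (α : A ≃+* A) (u : A) (ι : A →+* W) (X Y : W) : Prop where
  central : ∀ a : A, u * a = a * u
  YX : Y * X = ι (α u)
  XY : X * Y = ι u
  Ya : ∀ a : A, Y * ι a = ι (α a) * Y
  Xa : ∀ a : A, X * ι a = ι (α.symm a) * X
  free : Function.Bijective
    (fun f : ℤ →₀ A => f.sum fun i a => ι a * gwaMon X Y i)

/-- `R` is the conformal ambiskew polynomial ring `R(A, α, u − α(u), 1)` with respect to
the embedding `ι : A →ₐ[K] R` and the elements `x, y`: the defining relations hold and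
`R` is free as a left `A`-module with basis `{yⁱxʲ : i, j ≥ 0}`. -/
structure IsAmbiskew {K A R : Type*} [Field K] [Ring A] [Algebra K A] [Ring R] [Algebra K R]
    (α : A ≃ₐ[K] A) (u : A) (ι : A →ₐ[K] R) (x y : R) : Prop where
  ucentral : ∀ a : A, u * a = a * u
  ya : ∀ a : A, y * ι a = ι (α a) * y
  xa : ∀ a : A, x * ι a = ι (α.symm a) * x
  xy : x * y = y * x + ι (u - α u)
  free : Function.Bijective
    (fun f : ℕ × ℕ →₀ A => f.sum fun p a => ι a * (y ^ p.1 * x ^ p.2))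

/-- `S` is the skew Laurent polynomial ring `A[y^{±1}; α]` with respect to the embedding
`ι : A →ₐ[K] S` and the invertible element `Y`: `Y·a = α(a)·Y` and `S` is free as a left
`A`-module with basis `{Yⁱ : i ∈ ℤ}`. -/
structure IsSkewLaurent {K A S : Type*} [Field K] [Ring A] [Algebra K A] [Ring S] [Algebra K S]
    (α : A ≃ₐ[K] A) (ι : A →ₐ[K] S) (Y : Sˣ) : Prop where
  comm : ∀ a : A, (Y : S) * ι a = ι (α a) * (Y : S)
  free : Function.Bijective
    (fun f : ℤ →₀ A => f.sum fun i a => ι a * ((Y ^ i : Sˣ) : S))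

/-- `φ : R →+* C` exhibits `C` as the localization of `R` at the multiplicative set `Z`
of central elements: each element of `Z` is central and becomes a unit, every element of
`C` is a fraction, and the kernel of `φ` is the set of elements annihilated by `Z`. -/
structure IsCentralLocalization {R C : Type*} [Ring R] [Ring C] (Z : Set R) (φ : R →+* C) : Prop where
  central : ∀ s ∈ Z, ∀ r : R, s * r = r * s
  isUnit : ∀ s ∈ Z, IsUnit (φ s)
  surj : ∀ c : C, ∃ r : R, ∃ s ∈ Z, c * φ s = φ r
  ker : ∀ r : R, φ r = 0 ↔ ∃ s ∈ Z, r * s = 0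

/-- A two-sided ideal `P` is prime: it is proper and whenever the product of two two-sided
ideals lies in `P`, one of them lies in `P`. -/
def IsPrimeTwoSided {C : Type*} [Ring C] (P : TwoSidedIdeal C) : Prop :=
  P ≠ ⊤ ∧ ∀ I J : TwoSidedIdeal C, (∀ a ∈ I, ∀ b ∈ J, a * b ∈ P) → I ≤ P ∨ J ≤ P

/-- A two-sided ideal `M` is maximal: proper and maximal among proper two-sided ideals. -/
def IsMaximalTwoSided {C : Type*} [Ring C] (M : TwoSidedIdeal C) : Prop :=
  M ≠ ⊤ ∧ ∀ T : TwoSidedIdeal C, M < T → T = ⊤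

/-- Evaluation of a (commutative) multivariate polynomial over `K` at a family of
(pairwise commuting, central) elements of a possibly noncommutative `K`-algebra. -/
def mvEval {K A : Type*} [CommSemiring K] [Ring A] [Algebra K A] {n : ℕ}
    (v : Fin n → A) (p : MvPolynomial (Fin n) K) : A :=
  p.support.sum fun d => algebraMap K A (MvPolynomial.coeff d p) *
    ((List.finRange n).map fun i => v i ^ d i).prod

/-- The components of the graded ideal `J(I)` of a generalized Weyl algebra:
`I_i = I_{-i} = A` for `i ≥ m`, `I_i = ∩_{ℓ=0}^{m−1−i} α^{−ℓ}(I)` for `0 ≤ i ≤ m−1`, and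
`I_{−i} = ∩_{ℓ=i}^{m−1} α^{−ℓ}(I)` for `0 ≤ i ≤ m−1`. -/
def Jcomp {A : Type*} [Ring A] (α : A ≃+* A) (I : Set A) (m : ℕ) : ℤ → Set A :=
  fun d => if m ≤ d.natAbs then Set.univ
    else if 0 ≤ d then ⋂ ℓ ∈ Finset.range (m - d.natAbs), (⇑α.symm)^[ℓ] '' I
    else ⋂ ℓ ∈ Finset.Icc d.natAbs (m - 1), (⇑α.symm)^[ℓ] '' I

/-- The subset of a generalized Weyl algebra consisting of all elements whose (unique)
graded components of each degree `d` have coefficients in the prescribed set `comp d`. -/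
def gwaGradedSet {A W : Type*} [Ring A] [Ring W] (ι : A →+* W) (X Y : W)
    (comp : ℤ → Set A) : Set W :=
  {w | ∃ f : ℤ →₀ A, (∀ d, f d ∈ comp d) ∧ w = f.sum fun d a => ι a * gwaMon X Y d}

/-- The set `Au + Aα^m(u)` in `A`. -/
def genSet2 {A : Type*} [Ring A] (x y : A) : Set A :=
  {a : A | ∃ b c : A, a = b * x + c * y}

/-- The product of two sets in a ring, closed under finite sums: for two-sided ideals
this is the usual ideal product. -/
def setMulSum {A : Type*} [Ring A] (S T : Set A) : Set A :=
  {x | ∃ (n : ℕ) (f g : Fin n → A), (∀ i, f i ∈ S ∧ g i ∈ T) ∧ x = ∑ i, f i * g i}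

/-- The (right-nested) product of a list of sets in a ring; the empty product is `A`. -/
def listProdSet {A : Type*} [Ring A] (l : List (Set A)) : Set A :=
  l.foldr setMulSum Set.univ

/-- The element `d_i = α(u)·α²(u)⋯αⁱ(u)`. -/
def dElt {A : Type*} [Ring A] (α : A ≃+* A) (u : A) (i : ℕ) : A :=
  ((List.range i).map fun s => (⇑α)^[s + 1] u).prod

/-- The element `e_i = α^{−i}(d_i) = u·α^{−1}(u)⋯α^{1−i}(u)`. -/
def eElt {A : Type*} [Ring A] (α : A ≃+* A) (u : A) (i : ℕ) : A :=
  (⇑α.symm)^[i] (dElt α u i)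

/-- Product of two two-sided ideals. -/
def tsiMul {R : Type*} [Ring R] (I J : TwoSidedIdeal R) : TwoSidedIdeal R :=
  TwoSidedIdeal.span {x | ∃ a ∈ I, ∃ b ∈ J, x = a * b}

/-- The (right-nested) product of a list of two-sided ideals; the empty product is `R`. -/
def tsiListProd {R : Type*} [Ring R] (l : List (TwoSidedIdeal R)) : TwoSidedIdeal R :=
  l.foldr tsiMul ⊤

/-- A subset of a ring is a right ideal. -/
def IsRightIdealSet {Q : Type*} [Ring Q] (S : Set Q) : Prop :=
  (0 : Q) ∈ S ∧ (∀ a ∈ S, ∀ b ∈ S, a + b ∈ S) ∧ (∀ a ∈ S, -a ∈ S) ∧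
    (∀ a ∈ S, ∀ q : Q, a * q ∈ S)

/-- A right ideal is uniform: it is nonzero and any two nonzero elements generate right
ideals with nonzero intersection (equivalently, any two nonzero submodules intersect
nontrivially). -/
def IsUniformRightIdealSet {Q : Type*} [Ring Q] (S : Set Q) : Prop :=
  (∃ a ∈ S, a ≠ 0) ∧ ∀ a ∈ S, a ≠ 0 → ∀ b ∈ S, b ≠ 0 →
    ∃ q₁ q₂ : Q, a * q₁ = b * q₂ ∧ a * q₁ ≠ 0

/-! ### Free ring extensions -/

/-- The additive map `(aᵢ) ↦ ∑ ψ(aᵢ) bᵢ` attached to a ring homomorphism `ψ : A → R` and a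
family `b` in `R`; it is bijective exactly when `R` is a free left `A`-module with basis `b`. -/
def combo {A R I : Type*} [Ring A] [Ring R] (ψ : A →+* R) (b : I → R) : (I →₀ A) →+ R :=
  Finsupp.liftAddHom fun i => (AddMonoidHom.mulRight (b i)).comp ψ.toAddMonoidHom

lemma combo_apply {A R I : Type*} [Ring A] [Ring R] (ψ : A →+* R) (b : I → R) (f : I →₀ A) :
    combo ψ b f = f.sum fun i a => ψ a * b i := rfl

lemma combo_single {A R I : Type*} [Ring A] [Ring R] (ψ : A →+* R) (b : I → R) (i : I) (a : A) :
    combo ψ b (Finsupp.single i a) = ψ a * b i := by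
  simp [combo]

lemma combo_smul {A R I : Type*} [Ring A] [Ring R] (ψ : A →+* R) (b : I → R) (a : A)
    (f : I →₀ A) : combo ψ b (a • f) = ψ a * combo ψ b f := by
  induction f using Finsupp.induction_linear with
  | zero => simp
  | add f g hf hg => simp [smul_add, hf, hg, mul_add]
  | single i a' => rw [Finsupp.smul_single, combo_single, combo_single, smul_eq_mul, map_mul, mul_assoc]

lemma combo_hom_ext {A R I E : Type*} [Ring A] [Ring R] [AddCommMonoid E] {ψ : A →+* R}
    {b : I → R} (h : Function.Surjective (combo ψ b)) {f g : R →+ E}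
    (hfg : ∀ a i, f (ψ a * b i) = g (ψ a * b i)) : f = g := by
  have : f.comp (combo ψ b) = g.comp (combo ψ b) := by
    apply Finsupp.addHom_ext
    intro i a
    simpa [combo_single] using hfg a i
  ext r
  obtain ⟨w, rfl⟩ := h r
  exact DFunLike.congr_fun this w

/-- Bases multiply along a tower `B → A → R`. -/
lemma combo_tower {B A R I D : Type*} [Ring B] [Ring A] [Ring R] (ψ : B →+* A) (m : D → A)
    (ι : A →+* R) (y : I → R) (f : I × D →₀ B) :
    combo (ι.comp ψ) (fun p : I × D => ι (m p.2) * y p.1) f =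
      combo ι y (Finsupp.mapRange.addMonoidHom (combo ψ m) (Finsupp.curryAddEquiv f)) := by
  induction f using Finsupp.induction_linear with
  | zero => simp only [map_zero]
  | add f g hf hg => rw [map_add, hf, hg, map_add, map_add, map_add]
  | single p b =>
    rw [Finsupp.coe_curryAddEquiv, Finsupp.curry_single]
    rw [Finsupp.mapRange.addMonoidHom_apply, Finsupp.mapRange_single,
      combo_single, combo_single, combo_single, RingHom.comp_apply, map_mul, mul_assoc]

lemma combo_tower_bijective {B A R I D : Type*} [Ring B] [Ring A] [Ring R] (ψ : B →+* A)
    (m : D → A) (ι : A →+* R) (y : I → R) (hm : Function.Bijective (combo ψ m)) :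
    Function.Bijective (combo (ι.comp ψ) (fun p : I × D => ι (m p.2) * y p.1)) ↔
      Function.Bijective (combo ι y) := by
  have h : ⇑(combo (ι.comp ψ) (fun p : I × D => ι (m p.2) * y p.1)) =
      combo ι y ∘ ((Finsupp.mapRange.addEquiv (AddEquiv.ofBijective _ hm)) ∘
        (Finsupp.curryAddEquiv : (I × D →₀ B) ≃+ _)) := by
    funext f
    exact combo_tower ψ m ι y f
  rw [h]
  exact Function.Bijective.of_comp_iff _ ((AddEquiv.bijective _).comp (AddEquiv.bijective _))

/-- A ring homomorphism out of a free extension can be prescribed on the coefficients and the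
basis, as soon as the resulting additive map respects left multiplication by basis elements. -/
lemma exists_lift {A R E I : Type*} [Ring A] [Ring R] [Ring E] (ι : A →+* R) (b : I → R)
    (hb : Function.Bijective (combo ι b)) (ψ : A →+* E) (b' : I → E)
    (i₀ : I) (h0 : b i₀ = 1) (h0' : b' i₀ = 1)
    (H : ∀ θ : R →+ E, (∀ a i, θ (ι a * b i) = ψ a * b' i) → (∀ a s, θ (ι a * s) = ψ a * θ s) →
      ∀ i s, θ (b i * s) = b' i * θ s) :
    ∃ θ : R →+* E, (∀ a, θ (ι a) = ψ a) ∧ ∀ i, θ (b i) = b' i := by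
  let e := AddEquiv.ofBijective _ hb
  let θ : R →+ E := (combo ψ b').comp e.symm.toAddMonoidHom
  have hθ : ∀ f, θ (combo ι b f) = combo ψ b' f := fun f => by
    change combo ψ b' (e.symm (e f)) = _
    rw [e.symm_apply_apply]
  have h1 : ∀ a i, θ (ι a * b i) = ψ a * b' i := fun a i => by
    rw [← combo_single, hθ, combo_single]
  have h2 : ∀ a s, θ (ι a * s) = ψ a * θ s := fun a s => by
    obtain ⟨f, rfl⟩ := hb.2 s
    rw [← combo_smul, hθ, hθ, combo_smul]
  have h3 := H θ h1 h2
  have h4 : θ 1 = 1 := by simpa [h0, h0'] using h1 1 i₀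
  have h5 : ∀ r s, θ (r * s) = θ r * θ s := fun r s => by
    have : θ.comp (AddMonoidHom.mulRight s) = (AddMonoidHom.mulRight (θ s)).comp θ := by
      apply combo_hom_ext hb.2
      intro a i
      simp only [AddMonoidHom.comp_apply, AddMonoidHom.coe_mulRight, mul_assoc, h1, h2, h3]
    exact DFunLike.congr_fun this r
  refine ⟨{ toFun := θ, map_one' := h4, map_mul' := h5, map_zero' := map_zero θ,
            map_add' := map_add θ }, fun a => ?_, fun i => ?_⟩
  · simpa [h4] using h2 a 1
  · simpa using h1 1 i

/-! ### Evaluation of polynomials at central elements -/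

/-- Evaluation at a family of central elements, as an algebra homomorphism; it factors through
the centre, which is commutative. -/
def mvHom {K A : Type*} [Field K] [Ring A] [Algebra K A] {n : ℕ} (v : Fin n → A)
    (hv : ∀ i a, v i * a = a * v i) : MvPolynomial (Fin n) K →ₐ[K] A :=
  (Subalgebra.center K A).val.comp
    (MvPolynomial.aeval fun i => ⟨v i, Subalgebra.mem_center_iff.2 fun a => (hv i a).symm⟩)

lemma mvHom_eq {K A : Type*} [Field K] [Ring A] [Algebra K A] {n : ℕ} (v : Fin n → A)
    (hv : ∀ i a, v i * a = a * v i) (p : MvPolynomial (Fin n) K) :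
    mvEval v p = mvHom v hv p := by
  simp only [mvHom, AlgHom.comp_apply, MvPolynomial.aeval_def, MvPolynomial.eval₂_eq', map_sum,
    map_mul, Fin.prod_univ_def, map_list_prod, List.map_map, mvEval]
  rfl

lemma mvHom_X {K A : Type*} [Field K] [Ring A] [Algebra K A] {n : ℕ} (v : Fin n → A)
    (hv : ∀ i a, v i * a = a * v i) (i : Fin n) :
    mvHom (K := K) v hv (MvPolynomial.X i) = v i := by
  simp [mvHom]

lemma mvHom_comm {K A : Type*} [Field K] [Ring A] [Algebra K A] {n : ℕ} (v : Fin n → A)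
    (hv : ∀ i a, v i * a = a * v i) (p : MvPolynomial (Fin n) K) (a : A) :
    mvHom v hv p * a = a * mvHom v hv p := by
  have h : mvHom v hv p ∈ Subalgebra.center K A := Subtype.coe_prop _
  exact (Subalgebra.mem_center_iff.1 h a).symm

lemma mvHom_map {K A A' : Type*} [Field K] [Ring A] [Algebra K A] [Ring A'] [Algebra K A'] {n : ℕ}
    (v : Fin n → A) (hv : ∀ i a, v i * a = a * v i) (v' : Fin n → A')
    (hv' : ∀ i a, v' i * a = a * v' i) (θ : A →+* A')
    (hθ : ∀ k, θ (algebraMap K A k) = algebraMap K A' k) (h : ∀ i, θ (v i) = v' i)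
    (p : MvPolynomial (Fin n) K) : θ (mvHom v hv p) = mvHom v' hv' p := by
  let θ' : A →ₐ[K] A' := { θ with commutes' := hθ }
  have : θ'.comp (mvHom v hv) = mvHom v' hv' := by
    apply MvPolynomial.algHom_ext
    intro i
    simp only [AlgHom.comp_apply, mvHom_X]
    exact h i
  exact DFunLike.congr_fun this p

/-- The monomial `c^d` in a finite family of elements. -/
def mon {A : Type*} [Monoid A] {n : ℕ} (c : Fin n → A) (d : Fin n →₀ ℕ) : A :=
  ((List.finRange n).map fun i => c i ^ d i).prod

lemma mon_comm {A : Type*} [Monoid A] {n : ℕ} (c : Fin n → A)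
    (hc : ∀ i a, c i * a = a * c i) (d : Fin n →₀ ℕ) (a : A) : mon c d * a = a * mon c d := by
  have : a ∈ Submonoid.centralizer {mon c d} ∧ True := ⟨?_, trivial⟩
  · exact (Submonoid.mem_centralizer_iff.1 this.1 _ rfl)
  · rw [Submonoid.mem_centralizer_iff]
    rintro _ rfl
    have : mon c d ∈ Submonoid.center A := by
      apply Submonoid.list_prod_mem
      intro w hw
      obtain ⟨i, -, rfl⟩ := List.mem_map.1 hw
      exact Submonoid.pow_mem _ (Submonoid.mem_center_iff.2 fun g => (hc i g).symm) _
    exact (Submonoid.mem_center_iff.1 this a).symm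

lemma map_mon {A A' : Type*} [Ring A] [Ring A'] {n : ℕ} (c : Fin n → A) (d : Fin n →₀ ℕ)
    (θ : A →+* A') : θ (mon c d) = mon (fun i => θ (c i)) d := by
  simp [mon, map_list_prod, List.map_map, Function.comp_def]

/-- Polynomial evaluation is a `combo` of the monomials. -/
lemma mvEval_eq_combo {K A S : Type*} [Field K] [Ring S] [Algebra K S] [Ring A] [Algebra K A]
    {n : ℕ} (v : Fin n → A) (σ : S →+* A) (hσ : ∀ k, σ (algebraMap K S k) = algebraMap K A k)
    (p : MvPolynomial (Fin n) K) :
    mvEval v p = combo σ (mon v)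
      (Finsupp.mapRange (algebraMap K S) (map_zero _) (AddMonoidAlgebra.coeff p)) := by
  rw [combo_apply, Finsupp.sum_mapRange_index (by simp)]
  simp only [hσ]
  rfl

/-! ### Skew Laurent polynomial rings and their polynomial extensions -/

lemma laurent_bijective {K A S : Type*} [Field K] [Ring A] [Algebra K A] [Ring S] [Algebra K S]
    {α : A ≃ₐ[K] A} {ι : A →ₐ[K] S} {Y : Sˣ} (h : IsSkewLaurent α ι Y) :
    Function.Bijective (combo (ι : A →+* S) fun i : ℤ => ((Y ^ i : Sˣ) : S)) := h.free

/-- Universal property of the skew Laurent polynomial ring. -/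
lemma laurent_lift {K A S E : Type*} [Field K] [Ring A] [Algebra K A] [Ring S] [Algebra K S]
    [Ring E] {α : A ≃ₐ[K] A} {ι : A →ₐ[K] S} {Y : Sˣ} (h : IsSkewLaurent α ι Y)
    (ψ : A →+* E) (V : Eˣ) (hV : ∀ a, (V : E) * ψ a = ψ (α a) * V) :
    ∃ θ : S →+* E, (∀ a, θ (ι a) = ψ a) ∧ ∀ i : ℤ, θ ((Y ^ i : Sˣ) : S) = ((V ^ i : Eˣ) : E) := by
  have hb := laurent_bijective h
  refine exists_lift (ι : A →+* S) _ hb ψ (fun i : ℤ => ((V ^ i : Eˣ) : E)) 0 (by simp) (by simp) ?_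
  intro θ h1 h2
  have hY : ∀ s, θ ((Y : S) * s) = V * θ s := fun s => by
    have : θ.comp (AddMonoidHom.mulLeft (Y : S)) = (AddMonoidHom.mulLeft (V : E)).comp θ := by
      apply combo_hom_ext hb.2
      intro a i
      have e1 : (Y : S) * ((ι : A →+* S) a * ((Y ^ i : Sˣ) : S)) =
          (ι : A →+* S) (α a) * ((Y ^ (1 + i) : Sˣ) : S) := by
        rw [← mul_assoc]
        change (Y : S) * ι a * _ = ι (α a) * _
        rw [h.comm, mul_assoc, zpow_add, zpow_one, Units.val_mul]
      simp only [AddMonoidHom.comp_apply, AddMonoidHom.coe_mulLeft, e1, h1]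
      rw [← mul_assoc, hV, mul_assoc, zpow_add, zpow_one, Units.val_mul]
    exact DFunLike.congr_fun this s
  have hY' : ∀ s, θ (((Y⁻¹ : Sˣ) : S) * s) = ((V⁻¹ : Eˣ) : E) * θ s := fun s => by
    have := hY (((Y⁻¹ : Sˣ) : S) * s)
    rw [← mul_assoc, Units.mul_inv, one_mul] at this
    rw [this, ← mul_assoc, Units.inv_mul, one_mul]
  intro i
  induction i using Int.induction_on with
  | zero => simp
  | succ n ih =>
    intro s
    rw [zpow_add_one, zpow_add_one, Units.val_mul, mul_assoc, ih, hY, Units.val_mul, mul_assoc]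
  | pred n ih =>
    intro s
    rw [zpow_sub_one, zpow_sub_one, Units.val_mul, mul_assoc, ih, hY', Units.val_mul, mul_assoc]

/-- An element commuting with the images of `A` and `y` commutes with the image of the whole
skew Laurent polynomial ring. -/
lemma laurent_central {K A S E : Type*} [Field K] [Ring A] [Algebra K A] [Ring S] [Algebra K S]
    [Ring E] {α : A ≃ₐ[K] A} {ι : A →ₐ[K] S} {Y : Sˣ} (h : IsSkewLaurent α ι Y) (g : S →+* E)
    (s : E) (h1 : ∀ a, s * g (ι a) = g (ι a) * s) (h2 : s * g Y = g Y * s) (w : S) :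
    s * g w = g w * s := by
  have : (AddMonoidHom.mulLeft s).comp g.toAddMonoidHom =
      (AddMonoidHom.mulRight s).comp g.toAddMonoidHom := by
    apply combo_hom_ext (laurent_bijective h).2
    intro a i
    have h3 : Commute s (g ((Y ^ i : Sˣ) : S)) := by
      have := Commute.units_zpow_right (u := Units.map (g : S →* E) Y) (a := s) h2 i
      rw [← map_zpow] at this
      exact this
    have h4 : Commute s (g (ι a * ((Y ^ i : Sˣ) : S))) := by
      rw [map_mul]
      exact Commute.mul_right (h1 a) h3
    exact h4
  exact DFunLike.congr_fun this w

lemma combo_reindex {A R I J : Type*} [Ring A] [Ring R] (ψ : A →+* R) (b : I → R) (e : J ≃ I)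
    (h : Function.Bijective (combo ψ b)) : Function.Bijective (combo ψ (b ∘ e)) := by
  have : ⇑(combo ψ (b ∘ e)) = combo ψ b ∘ (Finsupp.domCongr e : (J →₀ A) ≃+ (I →₀ A)) := by
    funext f
    induction f using Finsupp.induction_linear with
    | zero => simp
    | add f g hf hg =>
      simp only [map_add, hf, hg, Function.comp_apply]
    | single j a => simp [combo_single]
  rw [this]
  exact h.comp (AddEquiv.bijective _)

/-- If `A = B[c₁,…,c_t]` with `α` fixing each `c_i`, then `A[y^{±1}; α]` is the polynomial ring in
`c₁,…,c_t` over `B[y^{±1}; α]`. -/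
lemma laurent_poly {K B S A SA : Type*} [Field K]
    [Ring B] [Algebra K B] [Ring S] [Algebra K S] [Ring A] [Algebra K A]
    [Ring SA] [Algebra K SA] {αB : B ≃ₐ[K] B}
    {ιSB : B →ₐ[K] S} {yB : Sˣ} (hSB : IsSkewLaurent αB ιSB yB)
    {t : ℕ} {ιB : B →ₐ[K] A} {c : Fin t → A}
    (hAfree : Function.Bijective (combo (ιB : B →+* A) (mon c)))
    {α : A ≃ₐ[K] A} (hαB : ∀ b : B, α (ιB b) = ιB (αB b))
    {ιSA : A →ₐ[K] SA} {yA : SAˣ} (hSA : IsSkewLaurent α ιSA yA)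
    (hc : ∀ i s, ιSA (c i) * s = s * ιSA (c i)) :
    ∃ σ : S →+* SA, (∀ b, σ (ιSB b) = ιSA (ιB b)) ∧
      (∀ i : ℤ, σ ((yB ^ i : Sˣ) : S) = ((yA ^ i : SAˣ) : SA)) ∧
      Function.Bijective (combo σ (mon fun i => ιSA (c i))) := by
  obtain ⟨σ, h1, h2⟩ := laurent_lift hSB ((ιSA : A →+* SA).comp (ιB : B →+* A)) yA (fun b => by
    simp only [RingHom.comp_apply, RingHom.coe_coe, hSA.comm, hαB])
  refine ⟨σ, h1, h2, ?_⟩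
  rw [← combo_tower_bijective (ιSB : B →+* S) _ σ _ (laurent_bijective hSB)]
  have h3 := (combo_tower_bijective _ _ (ιSA : A →+* SA) _ hAfree).2 (laurent_bijective hSA)
  have h4 := combo_reindex _ _ (Equiv.prodComm (Fin t →₀ ℕ) ℤ) h3
  have e1 : σ.comp (ιSB : B →+* S) = (ιSA : A →+* SA).comp (ιB : B →+* A) := RingHom.ext h1
  rw [e1]
  convert h4 using 3
  funext p
  simp only [Function.comp_apply, Equiv.prodComm_apply, Prod.fst_swap, Prod.snd_swap, h2]
  rw [map_mon]
  exact (mon_comm _ hc _ _).symm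

/-! ### Central elements and ideals of polynomial rings over a simple ring -/

lemma combo_mul_right {S T J : Type*} [Ring S] [Ring T] (σ : S →+* T) (m : J → T)
    (hm : ∀ j w, m j * w = w * m j) (s : S) (f : J →₀ S) :
    combo σ m (f.mapRange (· * s) (zero_mul s)) = combo σ m f * σ s := by
  induction f using Finsupp.induction_linear with
  | zero => simp
  | add f g hf hg =>
    rw [Finsupp.mapRange_add (fun a b => add_mul a b s), map_add, hf, hg, map_add, add_mul]
  | single j a =>
    rw [Finsupp.mapRange_single, combo_single, combo_single, map_mul, mul_assoc, mul_assoc, hm]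

/-- Coordinates of an element of a free extension with respect to the basis. -/
def coords {S T J : Type*} [Ring S] [Ring T] {σ : S →+* T} {m : J → T}
    (h : Function.Bijective (combo σ m)) : T ≃+ (J →₀ S) := (AddEquiv.ofBijective _ h).symm

lemma combo_coords {S T J : Type*} [Ring S] [Ring T] {σ : S →+* T} {m : J → T}
    (h : Function.Bijective (combo σ m)) (f : T) : combo σ m (coords h f) = f :=
  (AddEquiv.ofBijective _ h).apply_symm_apply f

lemma coords_mul_left {S T J : Type*} [Ring S] [Ring T] {σ : S →+* T} {m : J → T}
    (h : Function.Bijective (combo σ m)) (s : S) (f : T) (j : J) :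
    coords h (σ s * f) j = s * coords h f j := by
  have : coords h (σ s * f) = s • coords h f := by
    apply h.1
    rw [combo_coords, combo_smul, combo_coords]
  rw [this, Finsupp.smul_apply, smul_eq_mul]

lemma coords_mul_right {S T J : Type*} [Ring S] [Ring T] {σ : S →+* T} {m : J → T}
    (h : Function.Bijective (combo σ m)) (hm : ∀ j w, m j * w = w * m j) (s : S) (f : T) (j : J) :
    coords h (f * σ s) j = coords h f j * s := by
  have : coords h (f * σ s) = (coords h f).mapRange (· * s) (zero_mul s) := by
    apply h.1
    rw [combo_coords, combo_mul_right _ _ hm, combo_coords]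
  rw [this, Finsupp.mapRange_apply]

/-- The centre of a polynomial ring over a ring with centre `K`. -/
lemma centre_poly {K S T : Type*} [Field K] [Ring S] [Algebra K S] [Nontrivial S] [Ring T]
    [Algebra K T] (hScentre : ∀ s : S, (∀ w : S, s * w = w * s) → ∃ k : K, s = algebraMap K S k)
    (σ : S →+* T) (hσ : ∀ k, σ (algebraMap K S k) = algebraMap K T k)
    {n : ℕ} (c : Fin n → T) (hc : ∀ i a, c i * a = a * c i)
    (hb : Function.Bijective (combo σ (mon c))) :
    Function.Injective (mvEval (K := K) c) ∧
      {s : T | ∀ w : T, s * w = w * s} = Set.range (mvEval (K := K) c) := by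
  constructor
  · intro p q hpq
    rw [mvEval_eq_combo c σ hσ, mvEval_eq_combo c σ hσ] at hpq
    have h1 := Finsupp.mapRange_injective _ (map_zero _) (algebraMap K S).injective (hb.1 hpq)
    exact AddMonoidAlgebra.coeff_injective h1
  · ext s
    constructor
    · intro hs
      have h1 : ∀ d, ∃ k : K, coords hb s d = algebraMap K S k := fun d => by
        apply hScentre
        intro w
        rw [← coords_mul_left, ← coords_mul_right hb (mon_comm c hc), hs]
      choose k hk using h1
      have : s = mvHom c hc (∑ d ∈ (coords hb s).support, MvPolynomial.monomial d (k d)) := by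
        rw [map_sum]
        conv_lhs => rw [← combo_coords hb s, combo_apply, Finsupp.sum]
        refine Finset.sum_congr rfl fun d _ => ?_
        rw [hk, hσ, MvPolynomial.monomial_eq, map_mul, ← MvPolynomial.algebraMap_eq,
          AlgHom.commutes, Finsupp.prod_fintype _ _ (by simp), Fin.prod_univ_def, map_list_prod,
          List.map_map, mon]
        congr 3
        funext i
        simp [mvHom_X]
      exact ⟨_, (mvHom_eq c hc _).trans this.symm⟩
    · rintro ⟨p, rfl⟩ w
      rw [mvHom_eq c hc, mvHom_comm]

/-- In a simple ring a nonempty subset closed under the ideal operations and containing a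
nonzero element contains `1`. -/
lemma simple_one_mem {S : Type*} [Ring S] [IsSimpleRing S] (L : Set S) (h0 : 0 ∈ L)
    (hadd : ∀ {x y}, x ∈ L → y ∈ L → x + y ∈ L)
    (hl : ∀ {x y}, y ∈ L → x * y ∈ L) (hr : ∀ {x y}, x ∈ L → x * y ∈ L)
    (hne : ∃ s ∈ L, s ≠ 0) : 1 ∈ L := by
  obtain ⟨s, hs, hs0⟩ := hne
  let I := TwoSidedIdeal.mk' L h0 hadd (fun {x} hx => by simpa using hl (x := -1) hx) hl hr
  have hI : ∀ x, x ∈ I ↔ x ∈ L := fun x => TwoSidedIdeal.mem_mk' ..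
  rcases eq_bot_or_eq_top I with h | h
  · exact absurd ((TwoSidedIdeal.mem_bot S).1 (h ▸ (hI s).2 hs)) hs0
  · rw [← hI, h]
    trivial

/-- A nonzero `S`-sub-bimodule of a free extension of a simple ring `S` with central basis contains
a nonzero element commuting with `S`: take an element of minimal support with one coordinate
equal to `1`; its commutators with `S` have smaller support, hence vanish. -/
lemma exists_commuting {S T J : Type*} [Ring S] [IsSimpleRing S] [Ring T] (σ : S →+* T)
    (κ : T →+ (J → S)) (hinj : Function.Injective κ) (hfin : ∀ f, {j | κ f j ≠ 0}.Finite)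
    (hl : ∀ s f j, κ (σ s * f) j = s * κ f j) (hr : ∀ s f j, κ (f * σ s) j = κ f j * s)
    (I : AddSubgroup T) (hIl : ∀ s, ∀ f ∈ I, σ s * f ∈ I) (hIr : ∀ s, ∀ f ∈ I, f * σ s ∈ I)
    (hne : ∃ f ∈ I, f ≠ 0) : ∃ f ∈ I, f ≠ 0 ∧ ∀ s, σ s * f = f * σ s := by
  classical
  have hex : ∃ n, ∃ f ∈ I, f ≠ 0 ∧ {j | κ f j ≠ 0}.ncard = n := by
    obtain ⟨f, hf, hf0⟩ := hne
    exact ⟨_, f, hf, hf0, rfl⟩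
  obtain ⟨f₀, hf₀, hf₀0, hn⟩ := Nat.find_spec hex
  have hmin : ∀ g ∈ I, {j | κ g j ≠ 0}.ncard < {j | κ f₀ j ≠ 0}.ncard → g = 0 := fun g hg hlt => by
    by_contra h
    exact Nat.find_min hex (hn ▸ hlt) ⟨g, hg, h, rfl⟩
  obtain ⟨j₀, hj₀⟩ : ∃ j, κ f₀ j ≠ 0 := by
    by_contra! h
    exact hf₀0 (hinj (by rw [map_zero]; exact funext h))
  have h1 : (1 : S) ∈ {s : S | ∃ f ∈ I, (∀ j, κ f₀ j = 0 → κ f j = 0) ∧ κ f j₀ = s} := by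
    apply simple_one_mem
    · exact ⟨0, I.zero_mem, by simp, by simp⟩
    · rintro _ _ ⟨f, hf, hf1, rfl⟩ ⟨g, hg, hg1, rfl⟩
      exact ⟨f + g, I.add_mem hf hg, fun j hj => by simp [hf1 j hj, hg1 j hj], by simp⟩
    · rintro s _ ⟨f, hf, hf1, rfl⟩
      exact ⟨σ s * f, hIl s f hf, fun j hj => by simp [hl, hf1 j hj], hl ..⟩
    · rintro _ s ⟨f, hf, hf1, rfl⟩
      exact ⟨f * σ s, hIr s f hf, fun j hj => by simp [hr, hf1 j hj], hr ..⟩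
    · exact ⟨_, ⟨f₀, hf₀, fun _ h => h, rfl⟩, hj₀⟩
  obtain ⟨f, hf, hf1, hf2⟩ := h1
  refine ⟨f, hf, ?_, fun s => ?_⟩
  · rintro rfl
    simp at hf2
  · rw [← sub_eq_zero]
    apply hmin _ (I.sub_mem (hIl s f hf) (hIr s f hf))
    apply Set.ncard_lt_ncard _ (hfin f₀)
    rw [Set.ssubset_iff_exists]
    refine ⟨fun j hj hj' => hj ?_, j₀, hj₀, ?_⟩
    · simp [hl, hr, hf1 j hj']
    · simp [hl, hr, hf2]

lemma mvEval_cons_X {K T : Type*} [Field K] [Ring T] [Algebra K T] {n : ℕ} (c : Fin n → T)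
    (hc : ∀ i a, c i * a = a * c i) (p : MvPolynomial (Fin (n + 1)) K) :
    mvEval (Fin.cons Polynomial.X fun i => Polynomial.C (c i)) p =
      Polynomial.map (mvHom (K := K) c hc : MvPolynomial (Fin n) K →+* T)
        (MvPolynomial.finSuccEquiv K n p) := by
  have hv : ∀ i a, (Fin.cons Polynomial.X fun i => Polynomial.C (c i) : Fin (n + 1) → Polynomial T)
      i * a = a * (Fin.cons Polynomial.X fun i => Polynomial.C (c i) :
        Fin (n + 1) → Polynomial T) i := by
    intro i a
    refine Fin.cases ?_ (fun i => ?_) i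
    · simp only [Fin.cons_zero]
      exact Polynomial.X_mul
    · ext k
      simp [hc]
  rw [mvHom_eq _ hv]
  have : mvHom (K := K) _ hv = (Polynomial.mapAlgHom (mvHom (K := K) c hc)).comp
      (MvPolynomial.finSuccEquiv K n).toAlgHom := by
    apply MvPolynomial.algHom_ext
    intro i
    rw [mvHom_X]
    refine Fin.cases ?_ (fun i => ?_) i
    · simp [MvPolynomial.finSuccEquiv_X_zero]
    · simp [MvPolynomial.finSuccEquiv_X_succ, mvHom_X]
  rw [this]
  rfl

/-- Adjoining one more central indeterminate to a ring whose centre is a polynomial ring. -/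
lemma centre_poly_X {K T : Type*} [Field K] [Ring T] [Algebra K T] {n : ℕ} (c : Fin n → T)
    (hc : ∀ i a, c i * a = a * c i) (hinj : Function.Injective (mvEval (K := K) c))
    (hcen : {s : T | ∀ w : T, s * w = w * s} = Set.range (mvEval (K := K) c)) :
    Function.Injective (mvEval (K := K) (Fin.cons Polynomial.X fun i => Polynomial.C (c i))) ∧
    ∀ f : Polynomial T, (∀ w : T, f * Polynomial.C w = Polynomial.C w * f) →
      ∃ p, f = mvEval (K := K) (Fin.cons Polynomial.X fun i => Polynomial.C (c i)) p := by
  have hfun : mvEval (K := K) c = mvHom (K := K) c hc := funext (mvHom_eq c hc)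
  constructor
  · intro p q hpq
    rw [mvEval_cons_X c hc, mvEval_cons_X c hc] at hpq
    apply (MvPolynomial.finSuccEquiv K n).injective
    refine Polynomial.map_injective _ ?_ hpq
    rwa [hfun] at hinj
  · intro f hf
    have h1 : ∀ k, f.coeff k ∈ Set.range (mvEval (K := K) c) := fun k => by
      rw [← hcen]
      intro w
      simpa using congrArg (fun g => g.coeff k) (hf w)
    have h2 : f ∈ Polynomial.lifts (mvHom (K := K) c hc : MvPolynomial (Fin n) K →+* T) := by
      rw [Polynomial.lifts_iff_coeff_lifts]
      intro k
      obtain ⟨p, hp⟩ := h1 k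
      exact ⟨p, by rw [← hp, hfun]; rfl⟩
    obtain ⟨q, hq⟩ := (Polynomial.mem_lifts f).1 h2
    refine ⟨(MvPolynomial.finSuccEquiv K n).symm q, ?_⟩
    rw [mvEval_cons_X c hc, AlgEquiv.apply_symm_apply, hq]

/-- A nonzero `S`-sub-bimodule of `S[c₁,…,c_n][X]`, with `S` simple, contains a nonzero element
commuting with all of `S[c₁,…,c_n]`. -/
lemma exists_commuting_X {S T : Type*} [Ring S] [IsSimpleRing S] [Ring T] (σ : S →+* T)
    {n : ℕ} (c : Fin n → T) (hc : ∀ i a, c i * a = a * c i)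
    (hb : Function.Bijective (combo σ (mon c)))
    (I : AddSubgroup (Polynomial T)) (hIl : ∀ s, ∀ f ∈ I, Polynomial.C (σ s) * f ∈ I)
    (hIr : ∀ s, ∀ f ∈ I, f * Polynomial.C (σ s) ∈ I) (hne : ∃ f ∈ I, f ≠ 0) :
    ∃ f ∈ I, f ≠ 0 ∧ ∀ w, f * Polynomial.C w = Polynomial.C w * f := by
  let κ : Polynomial T →+ (ℕ × (Fin n →₀ ℕ) → S) :=
    { toFun := fun f p => coords hb (f.coeff p.1) p.2
      map_zero' := by ext; simp
      map_add' := fun f g => by ext; simp }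
  have hκ : ∀ f p, κ f p = coords hb (f.coeff p.1) p.2 := fun _ _ => rfl
  obtain ⟨f, hf, hf0, hf1⟩ := exists_commuting ((Polynomial.C : T →+* _).comp σ) κ
    (by
      intro f g hfg
      ext k
      apply (coords hb).injective
      ext d
      exact congrFun hfg (k, d))
    (by
      intro f
      refine Set.Finite.subset (f.support.finite_toSet.biUnion fun k _ =>
        ((coords hb (f.coeff k)).support.finite_toSet.image fun d => (k, d))) ?_
      rintro ⟨k, d⟩ h
      rw [Set.mem_ofPred_eq, hκ] at h
      simp only [Set.mem_iUnion]
      refine ⟨k, ?_, d, ?_, rfl⟩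
      · simp only [Finset.mem_coe, Polynomial.mem_support_iff]
        intro h0
        simp [h0] at h
      · simpa using h)
    (by
      intro s f j
      simp only [hκ, RingHom.comp_apply, Polynomial.coeff_C_mul, coords_mul_left])
    (by
      intro s f j
      simp only [hκ, RingHom.comp_apply, Polynomial.coeff_mul_C,
        coords_mul_right hb (mon_comm c hc)])
    I hIl hIr hne
  refine ⟨f, hf, hf0, fun w => ?_⟩
  have : (AddMonoidHom.mulLeft f).comp (Polynomial.C : T →+* _).toAddMonoidHom =
      (AddMonoidHom.mulRight f).comp (Polynomial.C : T →+* _).toAddMonoidHom := by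
    apply combo_hom_ext hb.2
    intro s d
    have h1 : Commute f (Polynomial.C (σ s)) := (hf1 s).symm
    have h2 : Commute f (Polynomial.C (mon c d)) := by
      ext k
      simp [mon_comm c hc]
    change f * Polynomial.C (σ s * mon c d) = Polynomial.C (σ s * mon c d) * f
    rw [Polynomial.C_mul]
    exact h1.mul_right h2
  exact DFunLike.congr_fun this w

/-! ### The ambiskew polynomial ring and its embedding -/

lemma ambiskew_bijective {K A R : Type*} [Field K] [Ring A] [Algebra K A] [Ring R] [Algebra K R]
    {α : A ≃ₐ[K] A} {u : A} {ι : A →ₐ[K] R} {x y : R} (h : IsAmbiskew α u ι x y) :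
    Function.Bijective (combo (ι : A →+* R) fun p : ℕ × ℕ => y ^ p.1 * x ^ p.2) := h.free

lemma ambiskew_induction {K A R : Type*} [Field K] [Ring A] [Algebra K A] [Ring R] [Algebra K R]
    {α : A ≃ₐ[K] A} {u : A} {ι : A →ₐ[K] R} {x y : R} (h : IsAmbiskew α u ι x y)
    {P : R → Prop} (hι : ∀ a, P (ι a)) (hx : P x) (hy : P y)
    (hadd : ∀ r s, P r → P s → P (r + s)) (hmul : ∀ r s, P r → P s → P (r * s)) (r : R) : P r := by
  have h1 : P 1 := by simpa using hι 1
  have hpow : ∀ w, P w → ∀ n : ℕ, P (w ^ n) := fun w hw n => by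
    induction n with
    | zero => simpa using h1
    | succ n ih => rw [pow_succ]; exact hmul _ _ ih hw
  obtain ⟨f, rfl⟩ := (ambiskew_bijective h).2 r
  induction f using Finsupp.induction_linear with
  | zero => simpa using hι 0
  | add f g hf hg => rw [map_add]; exact hadd _ _ hf hg
  | single p a =>
    rw [combo_single]
    exact hmul _ _ (hι a) (hmul _ _ (hpow y hy _) (hpow x hx _))

lemma pow_mul_coeff {K A E : Type*} [Field K] [Ring A] [Algebra K A] [Ring E] (α : A ≃ₐ[K] A)
    (ψ : A →+* E) (Y : E) (hY : ∀ a, Y * ψ a = ψ (α a) * Y) (n : ℕ) (a : A) :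
    Y ^ n * ψ a = ψ ((⇑α)^[n] a) * Y ^ n := by
  induction n generalizing a with
  | zero => simp
  | succ n ih => rw [pow_succ, mul_assoc, hY, ← mul_assoc, ih, mul_assoc]; rfl

lemma x_mul_pow {K A E : Type*} [Field K] [Ring A] [Algebra K A] [Ring E] (α : A ≃ₐ[K] A) (u : A)
    (ψ : A →+* E) (X Y : E) (hY : ∀ a, Y * ψ a = ψ (α a) * Y)
    (hXY : X * Y = Y * X + ψ (u - α u)) (n : ℕ) :
    X * Y ^ (n + 1) = Y ^ (n + 1) * X + ψ (u - (⇑α)^[n + 1] u) * Y ^ n := by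
  induction n with
  | zero => simpa using hXY
  | succ n ih =>
    rw [pow_succ Y (n + 1), ← mul_assoc, ih, add_mul, mul_assoc _ X Y, hXY, mul_add,
      pow_mul_coeff α ψ Y hY, mul_assoc _ (Y ^ n) Y, ← pow_succ, ← mul_assoc, add_assoc, ← add_mul,
      ← map_add, iterate_map_sub, ← Function.iterate_succ_apply]
    congr 3
    abel

/-- Universal property of the conformal ambiskew polynomial ring. -/
lemma ambiskew_lift {K A R E : Type*} [Field K] [Ring A] [Algebra K A] [Ring R] [Algebra K R]
    [Ring E] {α : A ≃ₐ[K] A} {u : A} {ι : A →ₐ[K] R} {x y : R} (h : IsAmbiskew α u ι x y)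
    (ψ : A →+* E) (X Y : E) (hY : ∀ a, Y * ψ a = ψ (α a) * Y)
    (hX : ∀ a, X * ψ a = ψ (α.symm a) * X) (hXY : X * Y = Y * X + ψ (u - α u)) :
    ∃ θ : R →+* E, (∀ a, θ (ι a) = ψ a) ∧ θ x = X ∧ θ y = Y := by
  have hb := ambiskew_bijective h
  obtain ⟨θ, h1, h2⟩ := exists_lift (ι : A →+* R) _ hb ψ (fun p : ℕ × ℕ => Y ^ p.1 * X ^ p.2) (0, 0)
    (by simp) (by simp) (by
      intro θ h1 h2
      have hYθ : ∀ s, θ (y * s) = Y * θ s := fun s => by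
        have : θ.comp (AddMonoidHom.mulLeft y) = (AddMonoidHom.mulLeft Y).comp θ := by
          apply combo_hom_ext hb.2
          rintro a ⟨i, j⟩
          have e1 : y * ((ι : A →+* R) a * (y ^ i * x ^ j)) =
              (ι : A →+* R) (α a) * (y ^ (i + 1) * x ^ j) := by
            rw [← mul_assoc, RingHom.coe_coe, h.ya, pow_succ']
            simp only [mul_assoc]
          have e2 := h1 (α a) (i + 1, j)
          have e3 := h1 a (i, j)
          simp only at e2 e3
          simp only [AddMonoidHom.comp_apply, AddMonoidHom.coe_mulLeft, e1]
          rw [e2, e3, ← mul_assoc Y, hY, pow_succ']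
          simp only [mul_assoc]
        exact DFunLike.congr_fun this s
      have hXθ : ∀ s, θ (x * s) = X * θ s := fun s => by
        have : θ.comp (AddMonoidHom.mulLeft x) = (AddMonoidHom.mulLeft X).comp θ := by
          apply combo_hom_ext hb.2
          rintro a ⟨i, j⟩
          have e0 := h1 a (i, j)
          simp only at e0
          simp only [AddMonoidHom.comp_apply, AddMonoidHom.coe_mulLeft]
          rw [e0, ← mul_assoc, RingHom.coe_coe, h.xa, ← mul_assoc X, hX]
          rcases i with _ | i
          · have e2 := h1 (α.symm a) (0, j + 1)
            simp only [pow_zero, one_mul, pow_succ', RingHom.coe_coe] at e2 ⊢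
            rw [mul_assoc, e2]
            simp only [mul_assoc]
          · have e1 : ι (α.symm a) * x * (y ^ (i + 1) * x ^ j) =
                ι (α.symm a) * (y ^ (i + 1) * x ^ (j + 1)) +
                ι (α.symm a * (u - (⇑α)^[i + 1] u)) * (y ^ i * x ^ j) := by
              rw [mul_assoc, ← mul_assoc x, x_mul_pow α u (ι : A →+* R) x y h.ya h.xy, map_mul,
                pow_succ' x]
              simp only [add_mul, mul_add, mul_assoc, RingHom.coe_coe]
            have e2 : ψ (α.symm a) * X * (Y ^ (i + 1) * X ^ j) =
                ψ (α.symm a) * (Y ^ (i + 1) * X ^ (j + 1)) +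
                ψ (α.symm a * (u - (⇑α)^[i + 1] u)) * (Y ^ i * X ^ j) := by
              rw [mul_assoc, ← mul_assoc X, x_mul_pow α u ψ X Y hY hXY, map_mul, pow_succ' X]
              simp only [add_mul, mul_add, mul_assoc]
            have e3 := h1 (α.symm a) (i + 1, j + 1)
            have e4 := h1 (α.symm a * (u - (⇑α)^[i + 1] u)) (i, j)
            simp only [RingHom.coe_coe] at e3 e4
            rw [e1, e2, map_add, e3, e4]
        exact DFunLike.congr_fun this s
      have hYp : ∀ n s, θ (y ^ n * s) = Y ^ n * θ s := fun n => by
        induction n with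
        | zero => simp
        | succ n ih => intro s; rw [pow_succ, pow_succ, mul_assoc, ih, hYθ, mul_assoc]
      have hXp : ∀ n s, θ (x ^ n * s) = X ^ n * θ s := fun n => by
        induction n with
        | zero => simp
        | succ n ih => intro s; rw [pow_succ, pow_succ, mul_assoc, ih, hXθ, mul_assoc]
      intro p s
      rw [mul_assoc, hYp, hXp, mul_assoc])
  exact ⟨θ, h1, by simpa using h2 (0, 1), by simpa using h2 (1, 0)⟩

/-- The ambiskew ring embeds in `A[y^{±1}; α][z]` through `x ↦ (z + u)y⁻¹`: the coefficient of the
top power of `z` recovers the top `x`-degree part. -/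
lemma ambiskew_embed {K A R SA : Type*} [Field K] [Ring A] [Algebra K A] [Ring R] [Algebra K R]
    [Ring SA] [Algebra K SA] {α : A ≃ₐ[K] A} {u : A} {ι : A →ₐ[K] R} {x y : R}
    (h : IsAmbiskew α u ι x y) {ιSA : A →ₐ[K] SA} {yA : SAˣ} (hSA : IsSkewLaurent α ιSA yA) :
    ∃ θ : R →+* Polynomial SA, Function.Injective θ ∧ (∀ a, θ (ι a) = Polynomial.C (ιSA a)) ∧
      θ y = Polynomial.C (yA : SA) ∧ θ (x * y - ι u) = Polynomial.X := by
  set W : Polynomial SA := (Polynomial.X + Polynomial.C (ιSA u)) *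
    Polynomial.C ((yA⁻¹ : SAˣ) : SA) with hW
  have hinv : ∀ a, ((yA⁻¹ : SAˣ) : SA) * ιSA a = ιSA (α.symm a) * ((yA⁻¹ : SAˣ) : SA) := fun a => by
    rw [Units.inv_mul_eq_iff_eq_mul, ← mul_assoc, hSA.comm, AlgEquiv.apply_symm_apply, mul_assoc,
      Units.mul_inv, mul_one]
  have hu : ∀ a, ιSA u * ιSA a = ιSA a * ιSA u := fun a => by
    rw [← map_mul, h.ucentral, map_mul]
  have hWy : W * Polynomial.C (yA : SA) = Polynomial.X + Polynomial.C (ιSA u) := by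
    rw [hW, mul_assoc, ← Polynomial.C_mul, Units.inv_mul, Polynomial.C_1, mul_one]
  obtain ⟨θ, h1, h2, h3⟩ := ambiskew_lift h ((Polynomial.C : SA →+* _).comp (ιSA : A →+* SA)) W
    (Polynomial.C (yA : SA))
    (fun a => by
      simp only [RingHom.comp_apply, RingHom.coe_coe, ← Polynomial.C_mul, hSA.comm])
    (fun a => by
      simp only [RingHom.comp_apply, RingHom.coe_coe, hW]
      rw [mul_assoc, ← Polynomial.C_mul, hinv, Polynomial.C_mul, ← mul_assoc, ← mul_assoc]
      congr 1
      rw [add_mul, mul_add, ← Polynomial.C_mul, ← Polynomial.C_mul, hu, Polynomial.X_mul])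
    (by
      simp only [RingHom.comp_apply, RingHom.coe_coe]
      rw [hWy, hW, ← mul_assoc, mul_add, ← Polynomial.C_mul, hSA.comm, ← Polynomial.X_mul,
        Polynomial.C_mul, ← add_mul, mul_assoc, ← Polynomial.C_mul, Units.mul_inv, Polynomial.C_1,
        mul_one, map_sub, Polynomial.C_sub]
      abel)
  refine ⟨θ, ?_, h1, h3, ?_⟩
  · rw [injective_iff_map_eq_zero]
    intro r hr
    by_contra hr0
    obtain ⟨f, rfl⟩ := (ambiskew_bijective h).2 r
    have hf : f.support.Nonempty := by
      rw [Finsupp.support_nonempty_iff]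
      rintro rfl
      exact hr0 (map_zero _)
    obtain ⟨⟨i₀, J⟩, hp, hmax⟩ := f.support.exists_max_image Prod.snd hf
    have hW' : W = Polynomial.C ((yA⁻¹ : SAˣ) : SA) * Polynomial.X +
        Polynomial.C (ιSA u * ((yA⁻¹ : SAˣ) : SA)) := by
      rw [hW, add_mul, Polynomial.X_mul, Polynomial.C_mul]
    have hWdeg : W.natDegree ≤ 1 := hW' ▸ Polynomial.natDegree_linear_le
    have hW1 : W.coeff 1 = ((yA⁻¹ : SAˣ) : SA) := by
      rw [hW']
      simp [Polynomial.coeff_C]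
    have hWj : ∀ j, (W ^ j).coeff j = ((yA⁻¹ : SAˣ) : SA) ^ j := fun j => by
      have := Polynomial.coeff_pow_of_natDegree_le (m := j) hWdeg
      rwa [mul_one, hW1] at this
    have hWlt : ∀ j, j < J → (W ^ j).coeff J = 0 := fun j hj => by
      apply Polynomial.coeff_eq_zero_of_natDegree_lt
      have := Polynomial.natDegree_pow_le_of_le j hWdeg
      omega
    let g : ℤ →₀ A := ∑ p ∈ f.support,
      if p.2 = J then Finsupp.single ((p.1 : ℤ) - J) (f p) else 0
    have hg : combo (ιSA : A →+* SA) (fun i : ℤ => ((yA ^ i : SAˣ) : SA)) g = 0 := by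
      have : (θ (combo (ι : A →+* R) (fun p : ℕ × ℕ => y ^ p.1 * x ^ p.2) f)).coeff J = 0 := by
        rw [hr, Polynomial.coeff_zero]
      rw [← this, combo_apply (ι : A →+* R), Finsupp.sum, map_sum θ, Polynomial.finsetSum_coeff]
      simp only [g]
      rw [map_sum]
      refine Finset.sum_congr rfl fun p hp => ?_
      rw [map_mul, map_mul, map_pow, map_pow, h2, h3, RingHom.coe_coe, h1, RingHom.comp_apply,
        Polynomial.coeff_C_mul, ← Polynomial.C_pow, Polynomial.coeff_C_mul]
      have := hmax p hp
      split_ifs with hJ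
      · rw [combo_single, ← hJ, hWj, zpow_sub, zpow_natCast, zpow_natCast, Units.val_mul,
          Units.val_pow_eq_pow_val, ← inv_pow, Units.val_pow_eq_pow_val]
      · rw [map_zero, hWlt _ (by simp only at this; omega), mul_zero, mul_zero]
    have hg0 : g = 0 := (laurent_bijective hSA).1 (hg.trans (map_zero _).symm)
    have hg1 : g ((i₀ : ℤ) - J) = f (i₀, J) := by
      simp only [g, Finsupp.finsetSum_apply]
      rw [Finset.sum_eq_single_of_mem (i₀, J) hp]
      · simp
      · rintro ⟨i, j⟩ - hne
        split_ifs with hJ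
        · apply Finsupp.single_eq_of_ne
          rintro hij
          apply hne
          simp only at hJ
          subst hJ
          simp only at hij
          congr 1
          omega
        · rfl
    rw [hg0] at hg1
    exact (Finsupp.mem_support_iff.1 hp) hg1.symm
  · rw [map_sub, map_mul, h1, h2, h3, hWy, RingHom.comp_apply]
    exact add_sub_cancel_right _ _

/-! ### The centre of the ambiskew ring and its saturated ideals -/

/-- The data of the embedding `θ : R → A[y^{±1}; α][X]` sending the Casimir element `z` to `X`,
where `A[y^{±1}; α]` is the polynomial ring in central elements `c₁,…,c_t` over `S` (via `σ`) and
has centre `K[c₁,…,c_t]`. -/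
structure CasimirEmbedding {K S A SA R : Type*} [Field K] [Ring S] [Ring A] [Algebra K A]
    [Ring SA] [Algebra K SA] [Ring R] [Algebra K R] (α : A ≃ₐ[K] A) {t : ℕ} (c : Fin t → A)
    (ιSA : A →ₐ[K] SA) (yA : SAˣ) (σ : S →+* SA) (ι : A →ₐ[K] R) (y z : R)
    (θ : R →+* Polynomial SA) : Prop where
  inj : Function.Injective θ
  map_coeff : ∀ a, θ (ι a) = Polynomial.C (ιSA a)
  map_y : θ y = Polynomial.C (yA : SA)
  map_z : θ z = Polynomial.X
  laurent : IsSkewLaurent α ιSA yA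
  c_comm : ∀ i s, ιSA (c i) * s = s * ιSA (c i)
  basis : Function.Bijective (combo σ (mon fun i => ιSA (c i)))
  centre_inj : Function.Injective (mvEval (K := K) fun i => ιSA (c i))
  centre_eq : {s : SA | ∀ w : SA, s * w = w * s} = Set.range (mvEval (K := K) fun i => ιSA (c i))

namespace CasimirEmbedding

variable {K S A SA R : Type*} [Field K] [Ring S] [Ring A] [Algebra K A]
    [Ring SA] [Algebra K SA] [Ring R] [Algebra K R] {α : A ≃ₐ[K] A} {t : ℕ} {c : Fin t → A}
    {ιSA : A →ₐ[K] SA} {yA : SAˣ} {σ : S →+* SA} {ι : A →ₐ[K] R} {y z : R}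
    {θ : R →+* Polynomial SA}

lemma comm_of_central (E : CasimirEmbedding α c ιSA yA σ ι y z θ) {r : R}
    (hr : ∀ w, r * w = w * r) (w : SA) : θ r * Polynomial.C w = Polynomial.C w * θ r := by
  apply laurent_central E.laurent
  · intro a
    rw [← E.map_coeff, ← map_mul, hr, map_mul]
  · rw [← E.map_y, ← map_mul, hr, map_mul]

lemma central_of_comm (E : CasimirEmbedding α c ιSA yA σ ι y z θ) {r : R}
    (hr : ∀ w : SA, θ r * Polynomial.C w = Polynomial.C w * θ r) (w : R) : r * w = w * r := by
  apply E.inj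
  rw [map_mul, map_mul]
  have h1 : ∀ f : Polynomial SA, Commute (θ r) f := fun f => by
    induction f using Polynomial.induction_on' with
    | add p q hp hq => exact hp.add_right hq
    | monomial n a =>
      rw [← Polynomial.C_mul_X_pow_eq_monomial]
      exact Commute.mul_right (hr a) (Polynomial.commute_X_pow _ _).symm
  exact h1 _

lemma gens_comm (E : CasimirEmbedding α c ιSA yA σ ι y z θ) (i : Fin (t + 1)) (r : R) :
    (Fin.cons z (fun i => ι (c i)) : Fin (t + 1) → R) i * r =
      r * (Fin.cons z (fun i => ι (c i)) : Fin (t + 1) → R) i := by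
  apply E.central_of_comm
  intro w
  refine Fin.cases ?_ (fun i => ?_) i
  · rw [Fin.cons_zero, E.map_z, Polynomial.X_mul_C]
  · rw [Fin.cons_succ, E.map_coeff, ← Polynomial.C_mul, ← Polynomial.C_mul, E.c_comm]

lemma map_eval (E : CasimirEmbedding α c ιSA yA σ ι y z θ) (p : MvPolynomial (Fin (t + 1)) K) :
    θ (mvEval (Fin.cons z fun i => ι (c i)) p) =
      mvEval (Fin.cons Polynomial.X fun i => Polynomial.C (ιSA (c i))) p := by
  have hX : ∀ i a, (Fin.cons Polynomial.X fun i => Polynomial.C (ιSA (c i)) :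
      Fin (t + 1) → Polynomial SA) i * a = a * (Fin.cons Polynomial.X
        fun i => Polynomial.C (ιSA (c i)) : Fin (t + 1) → Polynomial SA) i := by
    intro i a
    refine Fin.cases ?_ (fun i => ?_) i
    · rw [Fin.cons_zero, Polynomial.X_mul]
    · ext k
      simp [E.c_comm]
  rw [mvHom_eq _ E.gens_comm, mvHom_eq _ hX]
  apply mvHom_map
  · intro k
    rw [← AlgHom.commutes ι, E.map_coeff, AlgHom.commutes, Polynomial.algebraMap_apply]
  · intro i
    refine Fin.cases ?_ (fun i => ?_) i
    · simp [E.map_z]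
    · simp [E.map_coeff]

lemma eval_injective (E : CasimirEmbedding α c ιSA yA σ ι y z θ) :
    Function.Injective (mvEval (K := K) (Fin.cons z fun i => ι (c i))) := by
  intro p q hpq
  apply (centre_poly_X _ E.c_comm E.centre_inj E.centre_eq).1
  rw [← E.map_eval, ← E.map_eval, hpq]

lemma exists_eval (E : CasimirEmbedding α c ιSA yA σ ι y z θ) {f : Polynomial SA}
    (hf : ∀ w : SA, f * Polynomial.C w = Polynomial.C w * f) :
    ∃ p : MvPolynomial (Fin (t + 1)) K, f = θ (mvEval (Fin.cons z fun i => ι (c i)) p) := by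
  obtain ⟨p, hp⟩ := (centre_poly_X _ E.c_comm E.centre_inj E.centre_eq).2 f hf
  exact ⟨p, by rw [E.map_eval, hp]⟩

lemma eval_central (E : CasimirEmbedding α c ιSA yA σ ι y z θ) (p : MvPolynomial (Fin (t + 1)) K)
    (w : R) : mvEval (Fin.cons z fun i => ι (c i)) p * w =
      w * mvEval (Fin.cons z fun i => ι (c i)) p := by
  rw [mvHom_eq _ E.gens_comm, mvHom_comm]

lemma central_eq_eval (E : CasimirEmbedding α c ιSA yA σ ι y z θ) {r : R}
    (hr : ∀ w, r * w = w * r) : ∃ p : MvPolynomial (Fin (t + 1)) K,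
      r = mvEval (Fin.cons z fun i => ι (c i)) p := by
  obtain ⟨p, hp⟩ := E.exists_eval (E.comm_of_central hr)
  exact ⟨p, E.inj hp⟩

lemma eval_zero (E : CasimirEmbedding α c ιSA yA σ ι y z θ) :
    mvEval (K := K) (Fin.cons z fun i => ι (c i)) 0 = 0 := by
  rw [mvHom_eq _ E.gens_comm, map_zero]

/-- Nonzero central elements of `R` are regular: the annihilator of one in the polynomial ring
is an ideal, so it would contain a nonzero central element, but the centre is a domain. -/
lemma regular (E : CasimirEmbedding α c ιSA yA σ ι y z θ) [IsSimpleRing S] {r s : R}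
    (hs0 : s ≠ 0) (hs : ∀ w, s * w = w * s) (h : r * s = 0) : r = 0 := by
  by_contra hr
  have hsC := E.comm_of_central hs
  let I : AddSubgroup (Polynomial SA) := (AddMonoidHom.mulRight (θ s)).ker
  have hI : ∀ f, f ∈ I ↔ f * θ s = 0 := fun f => AddMonoidHom.mem_ker
  obtain ⟨f, hf, hf0, hfC⟩ := exists_commuting_X σ _ E.c_comm E.basis I
    (fun w f hf => by rw [hI] at hf ⊢; rw [mul_assoc, hf, mul_zero])
    (fun w f hf => by rw [hI] at hf ⊢; rw [mul_assoc, ← hsC, ← mul_assoc, hf, zero_mul])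
    ⟨θ r, by rw [hI, ← map_mul, h, map_zero], fun h => hr (E.inj (h.trans (map_zero θ).symm))⟩
  obtain ⟨p, hp⟩ := E.exists_eval hfC
  obtain ⟨q, hq⟩ := E.central_eq_eval hs
  rw [hI, hp, ← map_mul, hq, mvHom_eq _ E.gens_comm, mvHom_eq _ E.gens_comm, ← map_mul] at hf
  have h1 : p * q = 0 := by
    apply E.eval_injective
    rw [E.eval_zero, mvHom_eq _ E.gens_comm]
    exact E.inj (hf.trans (map_zero θ).symm)
  rcases mul_eq_zero.1 h1 with h | h
  · rw [hp, h, E.eval_zero, map_zero] at hf0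
    exact hf0 rfl
  · rw [hq, h, E.eval_zero] at hs0
    exact hs0 rfl

/-- Sets of polynomials stable under multiplication by `A`, `y` and `y⁻¹` on one side are stable
under multiplication by `A[y^{±1}; α]`. -/
lemma stable_of_gens (E : CasimirEmbedding α c ιSA yA σ ι y z θ) (I : AddSubgroup (Polynomial SA))
    (μ : SA →+ (Polynomial SA →+ Polynomial SA))
    (hμ : (∀ v w f, μ (v * w) f = μ v (μ w f)) ∨ ∀ v w f, μ (v * w) f = μ w (μ v f))
    (hμ1 : ∀ f, μ 1 f = f)
    (hA : ∀ a, ∀ f ∈ I, μ (ιSA a) f ∈ I) (hy : ∀ f ∈ I, μ (yA : SA) f ∈ I)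
    (hy' : ∀ f ∈ I, μ ((yA⁻¹ : SAˣ) : SA) f ∈ I) (w : SA) : ∀ f ∈ I, μ w f ∈ I := by
  have hmul : ∀ v w, (∀ f ∈ I, μ v f ∈ I) → (∀ f ∈ I, μ w f ∈ I) → ∀ f ∈ I, μ (v * w) f ∈ I := by
    intro v w hv hw f hf
    rcases hμ with h | h <;> rw [h]
    · exact hv _ (hw _ hf)
    · exact hw _ (hv _ hf)
  have hz : ∀ i : ℤ, ∀ f ∈ I, μ ((yA ^ i : SAˣ) : SA) f ∈ I := fun i => by
    induction i using Int.induction_on with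
    | zero => simp [hμ1]
    | succ n ih => rw [zpow_add_one, Units.val_mul]; exact hmul _ _ ih hy
    | pred n ih => rw [zpow_sub_one, Units.val_mul]; exact hmul _ _ ih hy'
  obtain ⟨g, rfl⟩ := (laurent_bijective E.laurent).2 w
  induction g using Finsupp.induction_linear with
  | zero => intro f hf; simp
  | add g h hg hh =>
    intro f hf
    rw [map_add, map_add]
    exact I.add_mem (hg f hf) (hh f hf)
  | single i a =>
    rw [combo_single]
    exact hmul _ _ (hA a) (hz i)

/-- A nonzero ideal of `R` which is saturated with respect to the nonzero central elements contains
a power of `y`, because it generates the unit ideal after inverting `y` and the centre. -/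
lemma exists_pow_mem (E : CasimirEmbedding α c ιSA yA σ ι y z θ) [IsSimpleRing S]
    (J : TwoSidedIdeal R)
    (hsat : ∀ s r : R, s ≠ 0 → (∀ w, s * w = w * s) → s * r ∈ J → r ∈ J)
    (hne : ∃ r ∈ J, r ≠ 0) : ∃ n : ℕ, y ^ n ∈ J := by
  set Y : Polynomial SA := Polynomial.C (yA : SA) with hY
  set Y' : Polynomial SA := Polynomial.C ((yA⁻¹ : SAˣ) : SA) with hY'
  have hYY : Y * Y' = 1 := by rw [hY, hY', ← Polynomial.C_mul, Units.mul_inv, Polynomial.C_1]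
  have hYY' : Y' * Y = 1 := by rw [hY, hY', ← Polynomial.C_mul, Units.inv_mul, Polynomial.C_1]
  have hθYn : ∀ n, θ (y ^ n) = Y ^ n := fun n => by rw [map_pow, E.map_y]
  have hup : ∀ f (n k l : ℕ), (∃ r ∈ J, Y ^ n * f * Y ^ n = θ r) →
      ∃ r ∈ J, Y ^ (k + n) * f * Y ^ (n + l) = θ r := by
    rintro f n k l ⟨r, hr, h⟩
    refine ⟨y ^ k * r * y ^ l, J.mul_mem_right _ _ (J.mul_mem_left _ _ hr), ?_⟩
    rw [map_mul, map_mul, ← h, hθYn, hθYn, pow_add, pow_add]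
    simp only [mul_assoc]
  let I : AddSubgroup (Polynomial SA) :=
    { carrier := {f | ∃ n : ℕ, ∃ r ∈ J, Y ^ n * f * Y ^ n = θ r}
      zero_mem' := ⟨0, 0, J.zero_mem, by simp⟩
      neg_mem' := by
        rintro f ⟨n, r, hr, h⟩
        exact ⟨n, -r, J.neg_mem hr, by rw [mul_neg, neg_mul, h, map_neg]⟩
      add_mem' := by
        rintro f g ⟨n, hf⟩ ⟨m, hg⟩
        obtain ⟨r, hr, h1⟩ := hup f n m m hf
        obtain ⟨s, hs, h2⟩ := hup g m n n hg
        refine ⟨m + n, r + s, J.add_mem hr hs, ?_⟩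
        rw [map_add, ← h1, ← h2, add_comm n m, mul_add, add_mul] }
  have hI : ∀ f, f ∈ I ↔ ∃ n : ℕ, ∃ r ∈ J, Y ^ n * f * Y ^ n = θ r := fun f => Iff.rfl
  have hYa : ∀ n a, Y ^ n * Polynomial.C (ιSA a) = Polynomial.C (ιSA ((⇑α)^[n] a)) * Y ^ n :=
    fun n a => pow_mul_coeff α ((Polynomial.C : SA →+* _).comp (ιSA : A →+* SA)) Y
      (fun a => by
        simp only [RingHom.comp_apply, RingHom.coe_coe, hY, ← Polynomial.C_mul, E.laurent.comm]) n a
  have hL : ∀ w : SA, ∀ f ∈ I, Polynomial.C w * f ∈ I := by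
    refine E.stable_of_gens I
      (AddMonoidHom.mul.comp (Polynomial.C : SA →+* Polynomial SA).toAddMonoidHom)
      (Or.inl ?_) ?_ ?_ ?_ ?_
    · intro v w f
      change Polynomial.C (v * w) * f = Polynomial.C v * (Polynomial.C w * f)
      rw [Polynomial.C_mul, mul_assoc]
    · intro f
      change Polynomial.C 1 * f = f
      rw [Polynomial.C_1, one_mul]
    · rintro a f ⟨n, r, hr, h⟩
      refine ⟨n, ι ((⇑α)^[n] a) * r, J.mul_mem_left _ _ hr, ?_⟩
      change Y ^ n * (Polynomial.C (ιSA a) * f) * Y ^ n = _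
      rw [← mul_assoc, hYa, mul_assoc, mul_assoc, ← mul_assoc (Y ^ n), h, map_mul, E.map_coeff]
    · rintro f ⟨n, hf⟩
      refine ⟨n, ?_⟩
      obtain ⟨r, hr, h⟩ := hup f n 1 0 hf
      refine ⟨r, hr, ?_⟩
      change Y ^ n * (Y * f) * Y ^ n = _
      rw [← h, ← mul_assoc, ← pow_succ, add_comm 1 n, add_zero]
    · rintro f ⟨n, hf⟩
      refine ⟨n + 1, ?_⟩
      obtain ⟨r, hr, h⟩ := hup f n 0 1 hf
      refine ⟨r, hr, ?_⟩
      change Y ^ (n + 1) * (Y' * f) * Y ^ (n + 1) = _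
      rw [← h, ← mul_assoc, pow_succ, mul_assoc (Y ^ n), hYY, mul_one, zero_add, ← pow_succ]
  have hR : ∀ w : SA, ∀ f ∈ I, f * Polynomial.C w ∈ I := by
    refine E.stable_of_gens I
      (AddMonoidHom.mul.flip.comp (Polynomial.C : SA →+* Polynomial SA).toAddMonoidHom)
      (Or.inr ?_) ?_ ?_ ?_ ?_
    · intro v w f
      change f * Polynomial.C (v * w) = f * Polynomial.C v * Polynomial.C w
      rw [Polynomial.C_mul, mul_assoc]
    · intro f
      change f * Polynomial.C 1 = f
      rw [Polynomial.C_1, mul_one]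
    · rintro a f ⟨n, r, hr, h⟩
      -- `a yⁿ = yⁿ α⁻ⁿ(a)`
      obtain ⟨b, rfl⟩ : ∃ b, (⇑α)^[n] b = a := (α.surjective.iterate n) a
      refine ⟨n, r * ι b, J.mul_mem_right _ _ hr, ?_⟩
      change Y ^ n * (f * Polynomial.C (ιSA ((⇑α)^[n] b))) * Y ^ n = _
      rw [mul_assoc, mul_assoc, ← hYa, map_mul, ← h, E.map_coeff]
      simp only [mul_assoc]
    · rintro f ⟨n, hf⟩
      refine ⟨n, ?_⟩
      obtain ⟨r, hr, h⟩ := hup f n 0 1 hf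
      refine ⟨r, hr, ?_⟩
      change Y ^ n * (f * Y) * Y ^ n = _
      rw [← h, add_comm n 1, pow_add Y 1 n, pow_one, zero_add]
      simp only [mul_assoc]
    · rintro f ⟨n, hf⟩
      refine ⟨n + 1, ?_⟩
      obtain ⟨r, hr, h⟩ := hup f n 1 0 hf
      refine ⟨r, hr, ?_⟩
      change Y ^ (n + 1) * (f * Y') * Y ^ (n + 1) = _
      rw [← h, pow_succ' Y n, ← mul_assoc, ← mul_assoc, mul_assoc (Y * Y ^ n * f), hYY',
        mul_one, add_zero, add_comm 1 n, pow_succ' Y n]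
  obtain ⟨r, hr, hr0⟩ := hne
  obtain ⟨f, ⟨n, s, hs, h⟩, hf0, hfC⟩ := exists_commuting_X σ _ E.c_comm E.basis I
    (fun w => hL (σ w)) (fun w => hR (σ w))
    ⟨θ r, ⟨0, r, hr, by simp⟩, fun h => hr0 (E.inj (h.trans (map_zero θ).symm))⟩
  obtain ⟨p, rfl⟩ := E.exists_eval hfC
  refine ⟨n + n, hsat (mvEval (Fin.cons z fun i => ι (c i)) p) _ ?_ (E.eval_central p) ?_⟩
  · rintro h0
    exact hf0 (by rw [h0, map_zero])
  · rw [← hθYn, ← map_mul, ← map_mul] at h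
    rw [pow_add, ← mul_assoc, E.eval_central, E.inj h]
    exact hs

end CasimirEmbedding

/-! ### Ideals killing a power of `y`, and descent along powers of `y` -/

/-- The substitution `X₀ ↦ -X₀` in `K[X₀,…,X_t]`. It converts between `z` and `-u`: these two act
alike where `xy` acts as zero. -/
def negX (K : Type*) [Field K] (t : ℕ) :
    MvPolynomial (Fin (t + 1)) K →ₐ[K] MvPolynomial (Fin (t + 1)) K :=
  MvPolynomial.aeval (Fin.cons (-MvPolynomial.X 0) fun i => MvPolynomial.X i.succ)

lemma negX_negX {K : Type*} [Field K] {t : ℕ} (p : MvPolynomial (Fin (t + 1)) K) :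
    negX K t (negX K t p) = p := by
  have : (negX K t).comp (negX K t) = AlgHom.id K _ := by
    apply MvPolynomial.algHom_ext
    intro i
    refine Fin.cases ?_ (fun i => ?_) i <;> simp [negX]
  exact DFunLike.congr_fun this p

lemma negX_ne_zero {K : Type*} [Field K] {t : ℕ} {p : MvPolynomial (Fin (t + 1)) K} (hp : p ≠ 0) :
    negX K t p ≠ 0 := fun h => hp (by rw [← negX_negX p, h, map_zero])

lemma mvHom_negX {K A : Type*} [Field K] [Ring A] [Algebra K A] {t : ℕ} (v v' : Fin (t + 1) → A)
    (hv : ∀ i a, v i * a = a * v i) (hv' : ∀ i a, v' i * a = a * v' i)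
    (h0 : v' 0 = -v 0) (hs : ∀ i : Fin t, v' i.succ = v i.succ) (p : MvPolynomial (Fin (t + 1)) K) :
    mvHom v hv (negX K t p) = mvHom v' hv' p := by
  have : (mvHom v hv).comp (negX K t) = mvHom v' hv' := by
    apply MvPolynomial.algHom_ext
    intro i
    refine Fin.cases ?_ (fun i => ?_) i
    · simp [negX, mvHom_X, h0]
    · simp [negX, mvHom_X, hs]
  exact DFunLike.congr_fun this p

lemma cons_comm {A : Type*} [Ring A] {t : ℕ} {c : Fin t → A} {u : A}
    (hc : ∀ i a, c i * a = a * c i) (hu : ∀ a, u * a = a * u) (i : Fin (t + 1)) (a : A) :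
    (Fin.cons u c : Fin (t + 1) → A) i * a = a * (Fin.cons u c : Fin (t + 1) → A) i := by
  refine Fin.cases ?_ (fun i => ?_) i
  · simpa using hu a
  · simpa using hc i a

lemma iterate_central {K A : Type*} [Field K] [Ring A] [Algebra K A] (α : A ≃ₐ[K] A) {u : A}
    (hu : ∀ a, u * a = a * u) (k : ℕ) (a : A) : (⇑α)^[k] u * a = a * (⇑α)^[k] u := by
  induction k generalizing a with
  | zero => exact hu a
  | succ k ih =>
    obtain ⟨b, rfl⟩ := α.surjective a
    rw [Function.iterate_succ_apply', ← map_mul, ih, map_mul]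

lemma sub_iterate_central {K A : Type*} [Field K] [Ring A] [Algebra K A] (α : A ≃ₐ[K] A) {u : A}
    (hu : ∀ a, u * a = a * u) (k : ℕ) (a : A) :
    (u - (⇑α)^[k] u) * a = a * (u - (⇑α)^[k] u) := by
  rw [sub_mul, mul_sub, hu, iterate_central α hu]

/-- Modulo `x yⁿ⁺¹ = (z + u) yⁿ` one may replace `u` by `-z` in front of `yⁿ`; thus
`v^(n+1) yⁿ ∈ J` and a nonzero `p(u, c) ∈ v^(n+1) A` put a nonzero central multiple of `yⁿ`
in `J`. -/
lemma CasimirEmbedding.pow_descent {K S A SA R : Type*} [Field K] [Ring S] [Ring A] [Algebra K A]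
    [Ring SA] [Algebra K SA] [Ring R] [Algebra K R] {α : A ≃ₐ[K] A} {t : ℕ} {c : Fin t → A}
    {ιSA : A →ₐ[K] SA} {yA : SAˣ} {σ : S →+* SA} {ι : A →ₐ[K] R} {x y z : R}
    {θ : R →+* Polynomial SA} (E : CasimirEmbedding α c ιSA yA σ ι y z θ) {u : A}
    (hR : IsAmbiskew α u ι x y) (hz : z = x * y - ι u) (hc : ∀ i a, c i * a = a * c i)
    (J : TwoSidedIdeal R)
    (hsat : ∀ s r : R, s ≠ 0 → (∀ w, s * w = w * s) → s * r ∈ J → r ∈ J)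
    (n : ℕ) (p : MvPolynomial (Fin (t + 1)) K) (hp : p ≠ 0) (a : A)
    (hpa : mvEval (Fin.cons u c) p = (u - (⇑α)^[n + 1] u) * a) (hJ : y ^ (n + 1) ∈ J) :
    y ^ n ∈ J := by
  have hu := hR.ucentral
  have huc := cons_comm hc hu
  have hzR : ∀ r, z * r = r * z := E.gens_comm 0
  have hcR : ∀ (i : Fin t) r, ι (c i) * r = r * ι (c i) := fun i => E.gens_comm i.succ
  have hnz := cons_comm (c := fun i => ι (c i)) (u := -z) hcR
    (fun r => by rw [neg_mul, hzR, mul_neg])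
  have h1 : (z + ι u) * y ^ n ∈ J := by
    rw [hz, sub_add_cancel, mul_assoc, ← pow_succ']
    exact J.mul_mem_left _ _ hJ
  have h2 : ι (u - (⇑α)^[n + 1] u) * y ^ n ∈ J := by
    have h := x_mul_pow α u (ι : A →+* R) x y hR.ya hR.xy n
    rw [← sub_eq_iff_eq_add'] at h
    exact h ▸ J.sub_mem (J.mul_mem_left _ _ hJ) (J.mul_mem_right _ _ hJ)
  have h3 : ι (mvHom _ huc p) * y ^ n ∈ J := by
    rw [← mvHom_eq, hpa, sub_iterate_central α hu, map_mul, mul_assoc]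
    exact J.mul_mem_left _ _ h2
  have h4 : ∀ q : MvPolynomial (Fin (t + 1)) K,
      (ι (mvHom _ huc q) - mvHom _ hnz q) * y ^ n ∈ J := by
    intro q
    induction q using MvPolynomial.induction_on with
    | C k =>
      rw [← MvPolynomial.algebraMap_eq, AlgHom.commutes, AlgHom.commutes, AlgHom.commutes, sub_self,
        zero_mul]
      exact J.zero_mem
    | add p q hp hq =>
      have := J.add_mem hp hq
      rwa [← add_mul, sub_add_sub_comm, ← map_add, ← map_add, ← map_add] at this
    | mul_X q i hq =>
      rw [map_mul, map_mul, map_mul, mvHom_X, mvHom_X]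
      refine Fin.cases ?_ (fun i => ?_) i
      · have e : (ι (mvHom _ huc q) * ι u - mvHom _ hnz q * -z) * y ^ n =
            ι (mvHom _ huc q) * ((z + ι u) * y ^ n) -
              z * ((ι (mvHom _ huc q) - mvHom _ hnz q) * y ^ n) := by
          rw [mul_neg, ← hzR, ← mul_assoc, ← mul_assoc, ← sub_mul, mul_add, mul_sub,
            ← hzR (ι _)]
          congr 1
          abel
        rw [Fin.cons_zero, Fin.cons_zero, e]
        exact J.sub_mem (J.mul_mem_left _ _ h1) (J.mul_mem_left _ _ hq)
      · rw [Fin.cons_succ, Fin.cons_succ, ← sub_mul, mul_assoc, hcR, ← mul_assoc]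
        exact J.mul_mem_right _ _ hq
  have h5 := J.sub_mem h3 (h4 p)
  rw [← sub_mul, sub_sub_cancel, ← mvHom_negX _ _ E.gens_comm hnz (by simp) (by simp)] at h5
  refine hsat _ _ ?_ (mvHom_comm _ _ _) h5
  intro h
  refine negX_ne_zero hp (E.eval_injective ?_)
  rw [E.eval_zero, mvHom_eq _ E.gens_comm, h]

lemma end_mul_apply {M : Type*} [AddCommGroup M] (P Q : AddMonoid.End M) (f : M) :
    (P * Q) f = P (Q f) := rfl

lemma end_add_apply {M : Type*} [AddCommGroup M] (P Q : AddMonoid.End M) (f : M) :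
    (P + Q) f = P f + Q f := rfl

lemma end_sub_apply {M : Type*} [AddCommGroup M] (P Q : AddMonoid.End M) (f : M) :
    (P - Q) f = P f - Q f := rfl

/-- Sequences in `A` form an `R`-module in which `x` shifts to the right, so that the Casimir
element acts on zeroth terms as `-u`. -/
lemma exists_sequence_rep {K A R : Type*} [Field K] [Ring A] [Algebra K A] [Ring R] [Algebra K R]
    {α : A ≃ₐ[K] A} {u : A} {ι : A →ₐ[K] R} {x y : R} (hR : IsAmbiskew α u ι x y) :
    ∃ Θ : R →+* AddMonoid.End (ℕ → A), (∀ a f i, Θ (ι a) f i = (⇑α)^[i] a * f i) ∧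
      (∀ f, Θ x f 0 = 0) ∧ (∀ f i, Θ x f (i + 1) = f i) ∧
      ∀ f i, Θ y f i = ((⇑α)^[i + 1] u - u) * f (i + 1) := by
  let ψ : A →+* AddMonoid.End (ℕ → A) :=
    { toFun := fun a =>
        { toFun := fun f i => (⇑α)^[i] a * f i
          map_zero' := by ext; simp
          map_add' := fun f g => by ext; simp [mul_add] }
      map_one' := by
        ext f i
        change (⇑α)^[i] 1 * f i = f i
        rw [iterate_map_one, one_mul]
      map_mul' := fun a b => by
        ext f i
        change (⇑α)^[i] (a * b) * f i = (⇑α)^[i] a * ((⇑α)^[i] b * f i)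
        rw [iterate_map_mul, mul_assoc]
      map_zero' := by
        ext f i
        change (⇑α)^[i] 0 * f i = 0
        rw [iterate_map_zero, zero_mul]
      map_add' := fun a b => by
        ext f i
        change (⇑α)^[i] (a + b) * f i = (⇑α)^[i] a * f i + (⇑α)^[i] b * f i
        rw [iterate_map_add, add_mul] }
  let X : AddMonoid.End (ℕ → A) :=
    { toFun := fun f i => Nat.casesOn i 0 f
      map_zero' := by ext i; cases i <;> rfl
      map_add' := fun f g => by
        ext i
        cases i
        · exact (add_zero 0).symm
        · rfl }
  let Y : AddMonoid.End (ℕ → A) :=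
    { toFun := fun f i => ((⇑α)^[i + 1] u - u) * f (i + 1)
      map_zero' := by ext; simp
      map_add' := fun f g => by ext; simp [mul_add] }
  have hψ : ∀ a f i, ψ a f i = (⇑α)^[i] a * f i := fun _ _ _ => rfl
  have hX0 : ∀ f, X f 0 = 0 := fun _ => rfl
  have hXs : ∀ f i, X f (i + 1) = f i := fun _ _ => rfl
  have hY : ∀ f i, Y f i = ((⇑α)^[i + 1] u - u) * f (i + 1) := fun _ _ => rfl
  obtain ⟨Θ, h1, h2, h3⟩ := ambiskew_lift hR ψ X Y
    (fun a => by
      ext f i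
      rw [end_mul_apply, end_mul_apply, hY, hψ, hψ, hY, ← mul_assoc,
        ← mul_assoc, ← Function.iterate_succ_apply, sub_mul, mul_sub, hR.ucentral,
        iterate_central α hR.ucentral])
    (fun a => by
      ext f i
      cases i with
      | zero => rw [end_mul_apply, end_mul_apply, hX0, hψ, hX0, mul_zero]
      | succ i =>
        rw [end_mul_apply, end_mul_apply, hXs, hψ, hψ, hXs,
          Function.iterate_succ_apply, AlgEquiv.apply_symm_apply])
    (by
      ext f i
      rw [end_add_apply, end_mul_apply, end_mul_apply, Pi.add_apply,
        hψ, hY, hXs]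
      cases i with
      | zero => rw [hX0, ← add_mul]; simp
      | succ i =>
        rw [hXs, hY, ← add_mul, iterate_map_sub, ← Function.iterate_succ_apply]
        congr 1
        abel)
  exact ⟨Θ, fun a f i => by rw [h1, hψ], fun f => by rw [h2, hX0], fun f i => by rw [h2, hXs],
    fun f i => by rw [h3, hY]⟩

/-- The elements of `R` whose action on sequences makes the first `m` terms divisible by `v^(m)`
form an ideal containing `yᵐ`; a central element `p(z, c)` of it acts on zeroth terms as
`p(-u, c)`. -/
lemma CasimirEmbedding.exists_ideal {K S A SA R : Type*} [Field K] [Ring S] [Ring A] [Algebra K A]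
    [Ring SA] [Algebra K SA] [Ring R] [Algebra K R] {α : A ≃ₐ[K] A} {t : ℕ} {c : Fin t → A}
    {ιSA : A →ₐ[K] SA} {yA : SAˣ} {σ : S →+* SA} {ι : A →ₐ[K] R} {x y z : R}
    {θ : R →+* Polynomial SA} (E : CasimirEmbedding α c ιSA yA σ ι y z θ) {u : A}
    (hR : IsAmbiskew α u ι x y) (hz : z = x * y - ι u) (hc : ∀ i a, c i * a = a * c i) (m : ℕ) :
    ∃ J : Set R, 0 ∈ J ∧ (∀ r ∈ J, ∀ s ∈ J, r + s ∈ J) ∧ (∀ r, ∀ s ∈ J, r * s ∈ J) ∧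
      (∀ r ∈ J, ∀ s, r * s ∈ J) ∧ y ^ m ∈ J ∧
      ∀ p : MvPolynomial (Fin (t + 1)) K, 1 ≤ m → mvEval (Fin.cons z fun i => ι (c i)) p ∈ J →
        ∃ a, mvEval (Fin.cons u c) (negX K t p) = (u - (⇑α)^[m] u) * a := by
  have hu := hR.ucentral
  obtain ⟨Θ, hΘ, hX0, hXs, hY⟩ := exists_sequence_rep hR
  set v : A := u - (⇑α)^[m] u with hv
  have hvc : ∀ a, v * a = a * v := sub_iterate_central α hu m
  have hdvd : ∀ a b, v ∣ b → v ∣ a * b := by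
    rintro a _ ⟨b, rfl⟩
    exact ⟨a * b, by rw [← mul_assoc, ← hvc, mul_assoc]⟩
  have hstab : ∀ r f, (∀ i < m, v ∣ f i) → ∀ i < m, v ∣ Θ r f i := by
    intro r
    induction r using ambiskew_induction hR with
    | hι a => intro f hf i hi; rw [hΘ]; exact hdvd _ _ (hf i hi)
    | hx =>
      rintro f hf (_ | i) hi
      · rw [hX0]; exact dvd_zero _
      · rw [hXs]; exact hf i (by omega)
    | hy =>
      intro f hf i hi
      rw [hY]
      rcases eq_or_ne (i + 1) m with h | h
      · rw [h, ← neg_sub, ← hv, neg_mul, ← mul_neg]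
        exact dvd_mul_right _ _
      · exact hdvd _ _ (hf _ (by omega))
    | hadd r s hr hs =>
      intro f hf i hi
      rw [map_add]
      exact dvd_add (hr f hf i hi) (hs f hf i hi)
    | hmul r s hr hs =>
      intro f hf i hi
      rw [map_mul]
      exact hr _ (hs f hf) i hi
  have hpow : ∀ n f i, i < m → m ≤ i + n → v ∣ Θ (y ^ n) f i := by
    intro n
    induction n with
    | zero => intro f i h1 h2; omega
    | succ n ih =>
      intro f i h1 h2
      rw [pow_succ', map_mul, end_mul_apply, hY]
      rcases eq_or_ne (i + 1) m with h | h
      · rw [h, ← neg_sub, ← hv, neg_mul, ← mul_neg]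
        exact dvd_mul_right _ _
      · exact hdvd _ _ (ih f _ (by omega) (by omega))
  have huc := cons_comm hc hu
  have hnu := cons_comm (u := -u) hc (fun a => by rw [neg_mul, hu, mul_neg])
  have h0 : ∀ (p : MvPolynomial (Fin (t + 1)) K) f,
      Θ (mvHom _ E.gens_comm p) f 0 = mvHom _ hnu p * f 0 := by
    intro p
    induction p using MvPolynomial.induction_on with
    | C k =>
      intro f
      rw [← MvPolynomial.algebraMap_eq, AlgHom.commutes, AlgHom.commutes, ← AlgHom.commutes ι, hΘ]
      rfl
    | add p q hp hq =>
      intro f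
      rw [map_add, map_add, map_add, add_mul, ← hp, ← hq]
      rfl
    | mul_X q i hq =>
      intro f
      rw [map_mul, map_mul, map_mul, mvHom_X, mvHom_X, end_mul_apply, hq, mul_assoc]
      congr 1
      refine Fin.cases ?_ (fun i => ?_) i
      · rw [Fin.cons_zero, Fin.cons_zero, hz, map_sub, end_sub_apply, Pi.sub_apply,
          map_mul, end_mul_apply, hX0, hΘ, zero_sub, neg_mul]
        rfl
      · rw [Fin.cons_succ, Fin.cons_succ, hΘ]
        rfl
  refine ⟨{r | ∀ f, ∀ i < m, v ∣ Θ r f i}, ?_, ?_, ?_, ?_, ?_, ?_⟩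
  · intro f i _
    rw [map_zero]
    exact dvd_zero _
  · intro r hr s hs f i hi
    rw [map_add]
    exact dvd_add (hr f i hi) (hs f i hi)
  · intro r s hs f i hi
    rw [map_mul]
    exact hstab r _ (hs f) i hi
  · intro r hr s f i hi
    rw [map_mul]
    exact hr _ i hi
  · intro f i hi
    exact hpow m f i hi (by omega)
  · intro p hm hp
    obtain ⟨a, ha⟩ := hp 1 0 (by omega)
    refine ⟨a, ?_⟩
    rw [mvHom_eq _ E.gens_comm, h0, Pi.one_apply, mul_one] at ha
    rw [mvHom_eq _ huc, mvHom_negX _ _ huc hnu (by simp) (by simp), ha]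

/-! ### Simplicity of the central localization -/

/-- If the localization is simple, every nonzero ideal of `R` contains a nonzero central element. -/
lemma CasimirEmbedding.exists_central_mem {K S A SA R C : Type*} [Field K] [Ring S] [Ring A]
    [Algebra K A] [Ring SA] [Algebra K SA] [Ring R] [Algebra K R] [Ring C] {α : A ≃ₐ[K] A} {t : ℕ}
    {c : Fin t → A} {ιSA : A →ₐ[K] SA} {yA : SAˣ} {σ : S →+* SA} {ι : A →ₐ[K] R} {y z : R}
    {θ : R →+* Polynomial SA} (E : CasimirEmbedding α c ιSA yA σ ι y z θ) [IsSimpleRing S]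
    {φ : R →+* C} (hφ : IsCentralLocalization {r : R | r ≠ 0 ∧ ∀ w : R, r * w = w * r} φ)
    [IsSimpleRing C] (J : Set R) (h0 : 0 ∈ J) (hadd : ∀ r ∈ J, ∀ s ∈ J, r + s ∈ J)
    (hl : ∀ r, ∀ s ∈ J, r * s ∈ J) (hr : ∀ r ∈ J, ∀ s, r * s ∈ J) (hne : ∃ r ∈ J, r ≠ 0) :
    ∃ s ∈ J, s ≠ 0 ∧ ∀ w, s * w = w * s := by
  have hinj : ∀ r, φ r = 0 → r = 0 := fun r hr => by
    obtain ⟨s, ⟨hs0, hs⟩, h⟩ := (hφ.ker r).1 hr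
    exact E.regular hs0 hs h
  have hmulZ : ∀ s s' : R, (s ≠ 0 ∧ ∀ w, s * w = w * s) → (s' ≠ 0 ∧ ∀ w, s' * w = w * s') →
      (s * s' ≠ 0 ∧ ∀ w, s * s' * w = w * (s * s')) := by
    rintro s s' ⟨h1, h2⟩ ⟨h3, h4⟩
    exact ⟨fun h => h1 (E.regular h3 h4 h),
      fun w => by rw [mul_assoc, h4, ← mul_assoc, h2, mul_assoc]⟩
  -- images of central elements commute with all fractions
  have hcen : ∀ s, (s ≠ 0 ∧ ∀ w, s * w = w * s) → ∀ d : C, φ s * d = d * φ s := by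
    intro s hs d
    obtain ⟨r, s', hs', h⟩ := hφ.surj d
    have h1 := hφ.isUnit s' hs'
    apply h1.mul_right_cancel
    rw [mul_assoc, h, ← map_mul, hs.2, map_mul, ← h, mul_assoc, mul_assoc, ← map_mul, ← map_mul,
      hs.2]
  have h1 : (1 : C) ∈ {d : C | ∃ s, (s ≠ 0 ∧ ∀ w, s * w = w * s) ∧ ∃ r ∈ J, d * φ s = φ r} := by
    obtain ⟨w, hw, hw0⟩ := hne
    obtain ⟨-, s₀, hs₀, -⟩ := hφ.surj 0
    apply simple_one_mem
    · exact ⟨s₀, hs₀, 0, h0, by rw [zero_mul, map_zero]⟩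
    · rintro d e ⟨s, hs, r, hr', h⟩ ⟨s', hs', r', hr'', h'⟩
      refine ⟨s * s', hmulZ s s' hs hs', r * s' + r' * s, hadd _ (hr _ hr' _) _ (hr _ hr'' _), ?_⟩
      rw [map_add, map_mul, map_mul, map_mul, ← h, ← h', add_mul, mul_assoc, mul_assoc,
        hcen s hs (φ s')]
    · rintro d e ⟨s, hs, r, hr', h⟩
      obtain ⟨r', s', hs', h'⟩ := hφ.surj d
      refine ⟨s * s', hmulZ s s' hs hs', r' * r, hl _ _ hr', ?_⟩
      rw [map_mul, map_mul, ← h, ← h', mul_assoc, ← mul_assoc e, h, ← hcen s' hs', ← mul_assoc]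
    · rintro d e ⟨s, hs, r, hr', h⟩
      obtain ⟨r', s', hs', h'⟩ := hφ.surj e
      refine ⟨s * s', hmulZ s s' hs hs', r * r', hr _ hr' _, ?_⟩
      rw [map_mul, map_mul, ← h, ← h', mul_assoc d (φ s), hcen s hs (e * φ s'), hcen s hs (φ s')]
      simp only [mul_assoc]
    · exact ⟨φ w, ⟨s₀, hs₀, w * s₀, hr _ hw _, by rw [map_mul]⟩, fun h => hw0 (hinj _ h)⟩
  obtain ⟨s, hs, r, hr', h⟩ := h1
  rw [one_mul, ← sub_eq_zero, ← map_sub] at h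
  exact ⟨s, sub_eq_zero.1 (hinj _ h) ▸ hr', hs⟩

/-- The localization is simple as soon as every nonzero saturated ideal of `R` is everything. -/
lemma localization_simple {R C : Type*} [Ring R] [Ring C] {φ : R →+* C}
    (hφ : IsCentralLocalization {r : R | r ≠ 0 ∧ ∀ w : R, r * w = w * r} φ) [Nontrivial C]
    (H : ∀ J : TwoSidedIdeal R, (∀ s r : R, s ≠ 0 → (∀ w, s * w = w * s) → s * r ∈ J → r ∈ J) →
      (∃ r ∈ J, r ≠ 0) → 1 ∈ J) : IsSimpleRing C := by
  refine ⟨⟨fun I => or_iff_not_imp_left.2 fun hI => ?_⟩⟩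
  have hJ : ∀ r, r ∈ I.comap φ ↔ φ r ∈ I := fun r => TwoSidedIdeal.mem_comap φ
  obtain ⟨d, hd, hd0⟩ : ∃ d ∈ I, d ≠ 0 := by
    by_contra! h
    exact hI (le_bot_iff.1 fun d hd => (TwoSidedIdeal.mem_bot C).2 (h d hd))
  obtain ⟨r, s, hs, h⟩ := hφ.surj d
  have h1 := H (I.comap φ) (fun s r hs0 hs hsr => by
    rw [hJ] at hsr ⊢
    obtain ⟨e, he⟩ := (hφ.isUnit s ⟨hs0, hs⟩).exists_left_inv
    have := I.mul_mem_left e _ hsr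
    rwa [map_mul, ← mul_assoc, he, one_mul] at this)
    ⟨r, by rw [hJ, ← h]; exact I.mul_mem_right _ _ hd, fun h0 => by
      rw [h0, map_zero] at h
      exact hd0 ((hφ.isUnit s hs).mul_left_eq_zero.1 h)⟩
  rw [hJ, map_one] at h1
  exact (TwoSidedIdeal.one_mem_iff I).1 h1

/-- Proposition 2.8: for `A = B[c₁,…,c_t]` a central polynomial extension of `B` with `α`
fixing the `c_i`, where `B[y^{±1}; α]` is simple with centre `K`: the centre of
`A[y^{±1}; α]` is the polynomial algebra `K[c₁,…,c_t]`, the centre of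
`R = R(A, α, u − α(u), 1)` is the polynomial algebra `K[z, c₁,…,c_t]`, and the
localization of `R` at the nonzero central elements is simple iff for each `m ≥ 1`
some nonzero `p_m(u, c₁,…,c_t)` lies in `v^(m)A`. -/
theorem stmt4 {K B S A SA R C : Type*} [Field K] [IsAlgClosed K]
    [Ring B] [Algebra K B] [Ring S] [Algebra K S] [Ring A] [Algebra K A]
    [Ring SA] [Algebra K SA] [Ring R] [Algebra K R] [Ring C]
    (αB : B ≃ₐ[K] B)
    -- `B[y^{±1}; αB]` is simple with centre `K`
    (ιSB : B →ₐ[K] S) (yB : Sˣ) (hSB : IsSkewLaurent αB ιSB yB)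
    (hSsimple : IsSimpleRing S)
    (hScentre : ∀ s : S, (∀ w : S, s * w = w * s) → ∃ k : K, s = algebraMap K S k)
    -- `A = B[c₁,…,c_t]`: polynomial ring over `B` in `t` central indeterminates
    (t : ℕ) (ιB : B →ₐ[K] A) (c : Fin t → A)
    (hccentral : ∀ i : Fin t, ∀ a : A, c i * a = a * c i)
    (hAfree : Function.Bijective
      (fun f : (Fin t →₀ ℕ) →₀ B => f.sum fun d b =>
        ιB b * ((List.finRange t).map fun i => c i ^ d i).prod))
    -- `α` extended to `A` fixing the `c_i`
    (α : A ≃ₐ[K] A) (hαB : ∀ b : B, α (ιB b) = ιB (αB b)) (hαc : ∀ i : Fin t, α (c i) = c i)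
    -- `u` central in `A`, the ambiskew ring `R = R(A, α, u − α(u), 1)`
    (u : A) (hu : ∀ a : A, u * a = a * u)
    (ι : A →ₐ[K] R) (x y : R) (hR : IsAmbiskew α u ι x y)
    -- the Casimir element `z = xy − u`
    (z : R) (hz : z = x * y - ι u)
    -- the skew Laurent polynomial ring `A[y^{±1}; α]`
    (ιSA : A →ₐ[K] SA) (yA : SAˣ) (hSA : IsSkewLaurent α ιSA yA)
    -- `φ : R →+* C` exhibits `C` as the localization of `R` at `Z = Z(R) \ {0}`
    (φ : R →+* C)
    (hφ : IsCentralLocalization {r : R | r ≠ 0 ∧ ∀ w : R, r * w = w * r} φ) :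
    -- (i) `Z(A[y^{±1}; α]) = K[c₁,…,c_t]`
    ((Function.Injective (mvEval (K := K) (fun i : Fin t => ιSA (c i))) ∧
      {s : SA | ∀ w : SA, s * w = w * s} = Set.range (mvEval (K := K) (fun i : Fin t => ιSA (c i)))) ∧
    -- (i) `Z(R) = K[z, c₁,…,c_t]`
     (Function.Injective (mvEval (K := K) (Fin.cons z (fun i : Fin t => ι (c i)))) ∧
      {r : R | ∀ w : R, r * w = w * r} =
        Set.range (mvEval (K := K) (Fin.cons z (fun i : Fin t => ι (c i)))))) ∧
    -- (ii) `R_Z` is simple iff for all `m ≥ 1` some nonzero `p_m(u, c₁,…,c_t) ∈ v^(m)A`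
    (IsSimpleRing C ↔
      ∀ m : ℕ, 1 ≤ m → ∃ p : MvPolynomial (Fin (t + 1)) K, p ≠ 0 ∧
        ∃ a : A, mvEval (Fin.cons u c) p = (u - (⇑α)^[m] u) * a) := by
  have hyA : ∀ i : Fin t, ∀ s, ιSA (c i) * s = s * ιSA (c i) := fun i s =>
    laurent_central hSA (RingHom.id SA) _
      (fun a => by rw [RingHom.id_apply, ← map_mul, hccentral, map_mul])
      (by rw [RingHom.id_apply, hSA.comm, hαc]) s
  obtain ⟨σ, hσB, -, hσ⟩ := laurent_poly hSB hAfree hαB hSA hyA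
  obtain ⟨hinj, hcen⟩ := centre_poly hScentre σ (fun k => by
    rw [← AlgHom.commutes ιSB, hσB, AlgHom.commutes, AlgHom.commutes]) _ hyA hσ
  obtain ⟨θ, hθ, hθι, hθy, hθz⟩ := ambiskew_embed hR hSA
  have E : CasimirEmbedding α c ιSA yA σ ι y z θ :=
    ⟨hθ, hθι, hθy, hz ▸ hθz, hSA, hyA, hσ, hinj, hcen⟩
  refine ⟨⟨⟨hinj, hcen⟩, E.eval_injective, ?_⟩, ?_⟩
  · ext r
    constructor
    · intro hr
      obtain ⟨p, rfl⟩ := E.central_eq_eval hr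
      exact ⟨p, rfl⟩
    · rintro ⟨p, rfl⟩
      exact E.eval_central p
  have hC : Nontrivial C := by
    refine ⟨1, 0, fun h => ?_⟩
    rw [← map_one φ, hφ.ker] at h
    obtain ⟨s, ⟨hs0, -⟩, hs⟩ := h
    exact hs0 (by rwa [one_mul] at hs)
  constructor
  · intro hCsimple m hm
    obtain ⟨J, h0, hadd, hl, hr, hy, hJ⟩ := E.exists_ideal hR hz hccentral m
    have hym : y ^ m ≠ 0 := by
      intro h
      have h1 : Polynomial.C (((yA ^ m : SAˣ)) : SA) = 0 := by
        rw [Units.val_pow_eq_pow_val, Polynomial.C_pow, ← hθy, ← map_pow, h, map_zero]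
      have : Nontrivial SA := hσ.1.nontrivial
      exact Units.ne_zero _ (Polynomial.C_eq_zero.1 h1)
    obtain ⟨s, hsJ, hs0, hs⟩ := E.exists_central_mem hφ J h0 hadd hl hr ⟨_, hy, hym⟩
    obtain ⟨p, rfl⟩ := E.central_eq_eval hs
    exact ⟨negX K t p, negX_ne_zero fun h => hs0 (by rw [h, E.eval_zero]), hJ p hm hsJ⟩
  · intro H
    refine localization_simple hφ fun J hsat hne => ?_
    obtain ⟨n, hn⟩ := E.exists_pow_mem J hsat hne
    induction n with
    | zero => rwa [pow_zero] at hn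
    | succ n ih =>
      obtain ⟨p, hp, a, ha⟩ := H (n + 1) (by omega)
      exact ih (E.pow_descent hR hz hccentral J hsat n p hp a ha hn)
end
end

section
/- Let q ∈ K \ {0} be not a root of unity, let A = K[c, k^{±1}] be the commutative K-algebra of Laurent polynomials in k with polynomial coefficient c, and let α be the K-automorphism of A with α(k) = q²k and α(c) = c. Fix a nonzero integer n and a Laurent polynomial f(k) = Σᵢ aᵢkⁱ ∈ K[k, k^{−1}] with a_n = 0, and set u = ck^n + f(k) and v = u − α(u). Let R = R(A, α, v, 1) be the corresponding conformal ambiskew polynomial ring (an augmented down-up algebra) with Casimir element z = xy − u. Then the centre Z(R) of R is the polynomial algebra K[c, z], every nonzero two-sided ideal of R has nonzero intersection with Z(R), and the central localization of R at Z(R) \ {0} is a simple ring. -/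
/-!
Write `A = K[c, k^{±1}]` and let `z` be the Casimir element. Since `xy = z + u` and
`yx = z + α(u)`, the ring `R` is a generalized Weyl algebra over the polynomial ring `A[z]`, on
which `α` acts fixing `c` and `z`: every element of `R` is a sum of terms `b·yⁱ` and `b·xⁱ` with
`b ∈ A[z]`, and `b·yⁱ` does not vanish unless `b = 0` (`exists_gwa_expansion`,
`eq_zero_of_mul_y_pow`). As `q` is not a root of unity, conjugation by `k` acts on the terms of
different degrees by different scalars, and `α` acts on the powers of `k` by different scalars, so
two eigenvector arguments (`mem_of_sum_eigenvectors_mem`, `eq_zero_of_sum_eigenvectors_fixed`) are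
available.

*Centre.* A central element commutes with `k`, so it has degree `0`, that is, it lies in `A[z]`. It
also commutes with `y`, so it is fixed by `α`, and the fixed ring of `α` on `A[z]` is `K[c, z]`
(`exists_eq_of_central`). Conversely `c` and `z` are central, and they are algebraically independent
(`casimirHom_injective`, `invHom_injective`).

*Ideals.* Let `T` be a nonzero two-sided ideal. It contains a nonzero homogeneous element, and after
multiplication by a power of `y` one of the form `b·yⁱ`. The `b` that occur in this way form a
nonzero `α`-stable ideal of `A[z]`, which therefore contains a nonzero `p ∈ K[c, z]`
(`exists_invHom_mem`). So `p·yⁱ ∈ T` for some `i`. If `i > 0`, multiplication by `x` on the right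
and on the left shows that `p·b·yⁱ⁻¹ ∈ T` for all `b` in the ideal `(z + u, z + αⁱ(u))` of `A[z]`.
Because `n ≠ 0`, the coefficients of `c` in `u` and `αⁱ(u)` are different scalar multiples of `kⁿ`;
hence modulo this ideal both `c` and `z` become Laurent polynomials in `k`, and two Laurent
polynomials in one variable are algebraically dependent. Thus the ideal meets `K[c, z]`
(`exists_invHom_mem_span`), the exponent `i` can be lowered, and finally `T` contains a nonzero
element of `K[c, z]` (`exists_central_mem_of_mul_y_pow`).

*Localization.* A nonzero ideal of the central localization contracts to a nonzero ideal of `R`,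
which contains a nonzero central element, that is, a unit of the localization
(`isSimpleRing_of_isCentralLocalization`).
-/

noncomputable section

/-! ### Separation of eigenvectors -/

/-- A submodule stable under `g` that contains a finite sum of eigenvectors of `g` with pairwise
distinct eigenvalues contains each of them. -/
theorem mem_of_sum_eigenvectors_mem {K V J : Type*} [Field K] [AddCommGroup V] [Module K V]
    (g : V →ₗ[K] V) (N : Submodule K V) (hN : ∀ v ∈ N, g v ∈ N)
    (μ : J → K) (hμ : Function.Injective μ) (s : Finset J) (v : J → V)
    (hv : ∀ i, g (v i) = μ i • v i) (hs : ∑ i ∈ s, v i ∈ N) : ∀ i ∈ s, v i ∈ N := by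
  classical
  induction s using Finset.induction_on generalizing v with
  | empty => simp
  | insert a s ha ih =>
    have h1 : ∑ i ∈ s, (μ i - μ a) • v i ∈ N := by
      have h2 := N.sub_mem (hN _ hs) (N.smul_mem (μ a) hs)
      rw [Finset.sum_insert ha, map_add, map_sum, smul_add, Finset.smul_sum, hv,
        add_sub_add_left_eq_sub, ← Finset.sum_sub_distrib] at h2
      simpa only [hv, ← sub_smul] using h2
    have h3 : ∀ i ∈ s, v i ∈ N := fun i hi => by
      have h4 := ih (fun i => (μ i - μ a) • v i)
        (fun i => by rw [map_smul, hv, smul_comm]) h1 i hi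
      refine (N.smul_mem_iff (sub_ne_zero.2 fun h => ha ?_)).1 h4
      exact hμ h ▸ hi
    intro i hi
    rcases Finset.mem_insert.1 hi with rfl | hi
    · rw [Finset.sum_insert ha] at hs
      exact (N.add_mem_iff_left (N.sum_mem h3)).1 hs
    · exact h3 i hi

/-- If a finite sum of eigenvectors of `g` with pairwise distinct eigenvalues is fixed by `g`, then
the summands with eigenvalue other than `1` vanish. -/
theorem eq_zero_of_sum_eigenvectors_fixed {K V J : Type*} [Field K] [AddCommGroup V] [Module K V]
    (g : V →ₗ[K] V) (μ : J → K) (hμ : Function.Injective μ) (s : Finset J) (v : J → V)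
    (hv : ∀ i, g (v i) = μ i • v i) (hs : g (∑ i ∈ s, v i) = ∑ i ∈ s, v i) (i : J) (hi : i ∈ s)
    (h1 : μ i ≠ 1) : v i = 0 := by
  have h0 : ∑ i ∈ s, (μ i - 1) • v i = 0 := by
    rw [← sub_eq_zero, map_sum, ← Finset.sum_sub_distrib] at hs
    simpa only [hv, sub_smul, one_smul] using hs
  have h2 := mem_of_sum_eigenvectors_mem g ⊥ (by simp) μ hμ s (fun i => (μ i - 1) • v i)
    (fun i => by rw [map_smul, hv, smul_comm]) (by rw [h0]; exact Submodule.zero_mem _) i hi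
  exact (smul_eq_zero.1 ((Submodule.mem_bot K).1 h2)).resolve_left (sub_ne_zero.2 h1)

/-! ### The generalized Weyl algebra structure over `A[z]` -/

section Ambiskew

open Polynomial

variable {K A R : Type*} [Field K] [CommRing A] [Algebra K A] [Ring R] [Algebra K R]
  {α : A ≃ₐ[K] A} {u : A} {ι : A →ₐ[K] R} {x y : R}

theorem commute_casimir (h : IsAmbiskew α u ι x y) (a : A) : Commute (ι a) (x * y - ι u) := by
  have h1 : x * y * ι a = ι a * (x * y) := by
    rw [mul_assoc, h.ya, ← mul_assoc, h.xa, AlgEquiv.symm_apply_apply, mul_assoc]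
  rw [commute_iff_eq, mul_sub, sub_mul, h1, ← map_mul, ← map_mul, mul_comm]

/-- The homomorphism `A[X] → R` extending `ι` and sending `X` to the Casimir element. -/
def casimirHom (h : IsAmbiskew α u ι x y) : A[X] →ₐ[K] R :=
  Polynomial.eval₂AlgHom ι (x * y - ι u) (commute_casimir h)

@[simp] theorem casimirHom_C (h : IsAmbiskew α u ι x y) (a : A) :
    casimirHom h (C a) = ι a :=
  eval₂_C _ _

@[simp] theorem casimirHom_X (h : IsAmbiskew α u ι x y) :
    casimirHom h X = x * y - ι u :=
  eval₂_X _ _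

/-- The extension of `α` to `A[X]` fixing `X`. -/
def extAut (α : A ≃ₐ[K] A) : A[X] ≃ₐ[K] A[X] := Polynomial.mapAlgEquiv α

@[simp] theorem extAut_C (a : A) : extAut α (C a) = C (α a) := by
  simp [extAut]

@[simp] theorem extAut_X : extAut α (X : A[X]) = X := by
  simp [extAut]

theorem extAut_monic {p : A[X]} (hp : p.Monic) :
    (extAut α p).Monic ∧ (extAut α p).natDegree = p.natDegree := by
  have h1 : extAut α p = p.map (α : A →+* A) := rfl
  rw [h1]
  exact ⟨hp.map _, Polynomial.natDegree_map_eq_of_injective α.injective _⟩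

theorem mul_x_casimir (h : IsAmbiskew α u ι x y) :
    x * (x * y - ι u) = (x * y - ι u) * x := by
  have h1 : x * ι (α u) = ι u * x := by rw [h.xa, AlgEquiv.symm_apply_apply]
  have h2 : x * (x * y) = x * (y * x) + x * ι u - ι u * x := by
    rw [h.xy, map_sub, mul_add, mul_sub, h1]; abel
  rw [mul_sub, h2, sub_mul]
  simp only [mul_assoc]
  abel

theorem mul_y_casimir (h : IsAmbiskew α u ι x y) :
    y * (x * y - ι u) = (x * y - ι u) * y := by
  have h1 : y * x = x * y - ι u + ι (α u) := by rw [h.xy, map_sub]; abel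
  have h2 : y * (x * y) = (x * y - ι u) * y + ι (α u) * y := by
    rw [← mul_assoc, h1, add_mul]
  rw [mul_sub, h2, h.ya]
  abel

theorem y_mul (h : IsAmbiskew α u ι x y) (p : A[X]) :
    y * casimirHom h p = casimirHom h (extAut α p) * y := by
  induction p using Polynomial.induction_on' with
  | add p q hp hq => simp only [map_add, mul_add, add_mul, hp, hq]
  | monomial n a =>
    have h1 : Commute y ((x * y - ι u) ^ n) := Commute.pow_right (mul_y_casimir h) n
    rw [← C_mul_X_pow_eq_monomial]
    simp only [map_mul, map_pow, casimirHom_C, casimirHom_X, extAut_C, extAut_X]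
    rw [← mul_assoc, h.ya, mul_assoc, h1.eq, mul_assoc]

theorem x_mul (h : IsAmbiskew α u ι x y) (p : A[X]) :
    x * casimirHom h p = casimirHom h ((extAut α).symm p) * x := by
  have h0 : ∀ p, x * casimirHom h (extAut α p) = casimirHom h p * x := by
    intro p
    induction p using Polynomial.induction_on' with
    | add p q hp hq => simp only [map_add, mul_add, add_mul, hp, hq]
    | monomial n a =>
      have h1 : Commute x ((x * y - ι u) ^ n) := Commute.pow_right (mul_x_casimir h) n
      rw [← C_mul_X_pow_eq_monomial]
      simp only [map_mul, map_pow, casimirHom_C, casimirHom_X, extAut_C, extAut_X]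
      rw [← mul_assoc, h.xa, AlgEquiv.symm_apply_apply, mul_assoc, h1.eq, mul_assoc]
  simpa using h0 ((extAut α).symm p)

theorem xy_eq (h : IsAmbiskew α u ι x y) : x * y = casimirHom h (X + C u) := by
  simp

theorem yx_eq (h : IsAmbiskew α u ι x y) : y * x = casimirHom h (X + C (α u)) := by
  rw [map_add, casimirHom_C, casimirHom_X, h.xy, map_sub]; abel

theorem y_pow_mul (h : IsAmbiskew α u ι x y) (i : ℕ) (p : A[X]) :
    y ^ i * casimirHom h p = casimirHom h ((extAut α)^[i] p) * y ^ i := by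
  induction i generalizing p with
  | zero => simp
  | succ i ih =>
    rw [pow_succ, mul_assoc, y_mul, ← mul_assoc, ih, Function.iterate_succ_apply, mul_assoc]

theorem x_pow_mul (h : IsAmbiskew α u ι x y) (i : ℕ) (p : A[X]) :
    x ^ i * casimirHom h p = casimirHom h ((extAut α).symm^[i] p) * x ^ i := by
  induction i generalizing p with
  | zero => simp
  | succ i ih =>
    rw [pow_succ, mul_assoc, x_mul, ← mul_assoc, ih, Function.iterate_succ_apply, mul_assoc]

theorem iterate_extAut_monic {p : A[X]} (hp : p.Monic) (i : ℕ) :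
    ((extAut α)^[i] p).Monic ∧ ((extAut α)^[i] p).natDegree = p.natDegree := by
  induction i with
  | zero => exact ⟨hp, rfl⟩
  | succ i ih =>
    rw [Function.iterate_succ_apply']
    exact ⟨(extAut_monic ih.1).1, (extAut_monic ih.1).2.trans ih.2⟩

theorem iterate_extAut_symm_monic {p : A[X]} (hp : p.Monic) (i : ℕ) :
    ((extAut α).symm^[i] p).Monic ∧ ((extAut α).symm^[i] p).natDegree = p.natDegree :=
  iterate_extAut_monic (α := α.symm) hp i

theorem iterate_extAut_linear (i : ℕ) (a : A) :
    (extAut α)^[i] (X + C a) = X + C ((⇑α)^[i] a) := by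
  induction i with
  | zero => rfl
  | succ i ih => rw [Function.iterate_succ_apply', ih, Function.iterate_succ_apply']; simp

theorem exists_y_pow_mul_x_pow [Nontrivial A] (h : IsAmbiskew α u ι x y) (j : ℕ) :
    ∃ D : A[X], D.Monic ∧ D.natDegree = j ∧ y ^ j * x ^ j = casimirHom h D := by
  induction j with
  | zero => exact ⟨1, monic_one, natDegree_one, by simp⟩
  | succ j ih =>
    obtain ⟨D, hD, hd, hD'⟩ := ih
    have h1 := iterate_extAut_monic (α := α) (monic_X_add_C (α u)) j
    refine ⟨(extAut α)^[j] (X + C (α u)) * D, h1.1.mul hD, ?_, ?_⟩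
    · rw [h1.1.natDegree_mul hD, h1.2, hd, natDegree_X_add_C, add_comm]
    · calc y ^ (j + 1) * x ^ (j + 1) = y ^ j * (y * x) * x ^ j := by
            rw [pow_succ, pow_succ']; simp only [mul_assoc]
        _ = _ := by rw [yx_eq h, y_pow_mul, mul_assoc, hD', map_mul]

theorem exists_x_pow_mul_y_pow [Nontrivial A] (h : IsAmbiskew α u ι x y) (j : ℕ) :
    ∃ D : A[X], D.Monic ∧ x ^ j * y ^ j = casimirHom h D := by
  induction j with
  | zero => exact ⟨1, monic_one, by simp⟩
  | succ j ih =>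
    obtain ⟨D, hD, hD'⟩ := ih
    have h1 := iterate_extAut_symm_monic (α := α) (monic_X_add_C u) j
    refine ⟨(extAut α).symm^[j] (X + C u) * D, h1.1.mul hD, ?_⟩
    calc x ^ (j + 1) * y ^ (j + 1) = x ^ j * (x * y) * y ^ j := by
            rw [pow_succ, pow_succ']; simp only [mul_assoc]
      _ = _ := by rw [xy_eq h, x_pow_mul, mul_assoc, hD', map_mul]

/-- Every element of `R` is a sum of terms `b·yⁱ` and `b·xⁱ` with `b ∈ A[z]`. -/
theorem exists_gwa_expansion [Nontrivial A] (h : IsAmbiskew α u ι x y) (r : R) :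
    ∃ F : ℤ →₀ A[X], r = F.sum fun d b => casimirHom h b * gwaMon x y d := by
  obtain ⟨g, rfl⟩ := h.free.2 r
  dsimp only
  induction g using Finsupp.induction_linear with
  | zero => exact ⟨0, by simp⟩
  | add g₁ g₂ h₁ h₂ =>
    obtain ⟨F₁, h₁⟩ := h₁
    obtain ⟨F₂, h₂⟩ := h₂
    refine ⟨F₁ + F₂, ?_⟩
    rw [Finsupp.sum_add_index' (by simp) (by intros; simp [add_mul]), h₁, h₂,
      Finsupp.sum_add_index' (by simp) (by intros; simp [add_mul])]
  | single p a =>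
    obtain ⟨i, j⟩ := p
    rw [Finsupp.sum_single_index (by simp)]
    rcases le_total j i with hij | hij
    · obtain ⟨e, rfl⟩ := Nat.exists_eq_add_of_le' hij
      obtain ⟨D, -, -, hD⟩ := exists_y_pow_mul_x_pow h j
      refine ⟨Finsupp.single (e : ℤ) (C a * (extAut α)^[e] D), ?_⟩
      rw [Finsupp.sum_single_index (by simp)]
      simp only [gwaMon, Nat.cast_nonneg, if_true, Int.toNat_natCast]
      rw [map_mul, mul_assoc, ← y_pow_mul, ← hD, pow_add, casimirHom_C]
      simp only [mul_assoc]
    · obtain ⟨e, rfl⟩ := Nat.exists_eq_add_of_le hij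
      obtain ⟨D, -, -, hD⟩ := exists_y_pow_mul_x_pow h i
      refine ⟨Finsupp.single (-(e : ℤ)) (C a * D), ?_⟩
      rw [Finsupp.sum_single_index (by simp), map_mul, ← hD, casimirHom_C, pow_add]
      have : gwaMon x y (-(e : ℤ)) = x ^ e := by
        rcases Nat.eq_zero_or_pos e with rfl | he
        · simp [gwaMon]
        · rw [gwaMon, if_neg (by omega)]; simp
      rw [this]
      simp only [mul_assoc]

/-- A monic sequence with one polynomial in every degree spans `A[X]` over `A`. -/
theorem exists_monic_expansion [Nontrivial A] (E : ℕ → A[X]) (hE : ∀ j, (E j).Monic)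
    (hd : ∀ j, (E j).natDegree = j) (b : A[X]) :
    ∃ g : ℕ →₀ A, b = g.sum fun j a => C a * E j := by
  let S : Polynomial.Sequence A :=
    ⟨E, fun i => by rw [degree_eq_natDegree (hE i).ne_zero, hd]⟩
  have h1 : b ∈ Submodule.span A (Set.range E) := by
    have := S.span (fun i => by
      have : (S.elems' i).leadingCoeff = 1 := hE i
      rw [this]; exact isUnit_one)
    rw [show Set.range E = Set.range S.elems' from rfl, this]
    trivial
  obtain ⟨g, hg⟩ := Finsupp.mem_span_range_iff_exists_finsupp.1 h1
  exact ⟨g, by simp only [← hg, Polynomial.smul_eq_C_mul]⟩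

/-- If the products `E j · W` with `E` monic of every degree are distinct basis monomials of `R`,
then `W` is not annihilated by nonzero elements of `A[z]`. -/
theorem eq_zero_of_mul_eq_zero [Nontrivial A] (h : IsAmbiskew α u ι x y) (E : ℕ → A[X])
    (hE : ∀ j, (E j).Monic) (hd : ∀ j, (E j).natDegree = j) (W : R) (e : ℕ ↪ ℕ × ℕ)
    (hW : ∀ j, casimirHom h (E j) * W = y ^ (e j).1 * x ^ (e j).2) (b : A[X])
    (hb : casimirHom h b * W = 0) : b = 0 := by
  obtain ⟨g, rfl⟩ := exists_monic_expansion E hE hd b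
  have h1 : (g.embDomain e) = 0 := by
    apply h.free.1
    dsimp only
    rw [Finsupp.sum_embDomain, Finsupp.sum_zero_index, ← hb, Finsupp.sum, Finsupp.sum, map_sum,
      Finset.sum_mul]
    refine Finset.sum_congr rfl fun j _ => ?_
    rw [map_mul, mul_assoc, hW, casimirHom_C]
  rw [Finsupp.embDomain_eq_zero] at h1
  simp [h1]

theorem eq_zero_of_mul_y_pow [Nontrivial A] (h : IsAmbiskew α u ι x y) (i : ℕ) (b : A[X])
    (hb : casimirHom h b * y ^ i = 0) : b = 0 := by
  choose D hD hd hD' using exists_y_pow_mul_x_pow h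
  refine eq_zero_of_mul_eq_zero h (fun j => (extAut α)^[i] (D j))
    (fun j => (iterate_extAut_monic (hD j) i).1)
    (fun j => ((iterate_extAut_monic (hD j) i).2).trans (hd j)) (y ^ i)
    ⟨fun j => (i + j, j), fun a b hab => (Prod.ext_iff.1 hab).2⟩ (fun j => ?_) b hb
  rw [← y_pow_mul, ← hD', ← mul_assoc, ← pow_add]
  rfl

end Ambiskew

/-! ### The coefficient ring `K[c, k^{±1}][z]` -/

section Laurent

open Polynomial

variable {K : Type*} [Field K]

/-- The features of the Laurent polynomial ring `L = K[k^{±1}]` with `τ e = kᵉ` on which the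
argument relies: the powers of `k` span `L`, there is an augmentation `L → K`, and any two elements
of `L` are algebraically dependent over `K`. -/
structure IsLaurent (K : Type*) {L : Type*} [Field K] [CommRing L] [Algebra K L] (τ : ℤ → L) :
    Prop where
  zero : τ 0 = 1
  add : ∀ a b, τ (a + b) = τ a * τ b
  span : ∀ l : L, l ∈ Submodule.span K (Set.range τ)
  augmentation : Nonempty (L →ₐ[K] K)
  dependent : ∀ g h : L, ∃ p : MvPolynomial (Fin 2) K, p ≠ 0 ∧ MvPolynomial.aeval ![g, h] p = 0

theorem trdeg_laurent : Algebra.trdeg K (LaurentPolynomial K) = 1 := by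
  have h1 : Algebra.IsAlgebraic K[X] (LaurentPolynomial K) :=
    IsLocalization.isAlgebraic (R := K[X]) (S := LaurentPolynomial K)
      (M := Submonoid.powers (X : K[X]))
  have : FaithfulSMul K[X] (LaurentPolynomial K) := by
    rw [faithfulSMul_iff_algebraMap_injective]
    exact Polynomial.toLaurent_injective
  have : IsScalarTower K K[X] (LaurentPolynomial K) :=
    IsScalarTower.of_algebraMap_eq fun t => (Polynomial.toLaurent_C t).symm
  rw [← trdeg_add_eq K K[X] (A := LaurentPolynomial K), Polynomial.trdeg_of_isDomain,
    trdeg_eq_zero, add_zero]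

theorem isLaurent_T : IsLaurent K (LaurentPolynomial.T : ℤ → LaurentPolynomial K) where
  zero := LaurentPolynomial.T_zero
  add := LaurentPolynomial.T_add
  span l := by
    induction l using LaurentPolynomial.induction_on' with
    | add a b ha hb => exact Submodule.add_mem _ ha hb
    | C_mul_T e t =>
      rw [← LaurentPolynomial.smul_eq_C_mul]
      exact Submodule.smul_mem _ _ (Submodule.subset_span ⟨e, rfl⟩)
  augmentation := ⟨AddMonoidAlgebra.lift K K ℤ 1⟩
  dependent g h := by
    by_contra! hcon
    have h1 : AlgebraicIndependent K ![g, h] := by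
      rw [algebraicIndependent_iff]
      intro p hp
      by_contra h0
      exact hcon p h0 hp
    have h2 := h1.lift_cardinalMk_le_trdeg
    rw [trdeg_laurent] at h2
    simp at h2

variable {L : Type*} [CommRing L] [Algebra K L] {τ : ℤ → L}

/-- The inclusion of `K[c, z]` in `K[c, k^{±1}][z]`; in the target, `c` is `C X` and `z` is `X`. -/
def invHom (K L : Type*) [Field K] [CommRing L] [Algebra K L] :
    MvPolynomial (Fin 2) K →ₐ[K] L[X][X] :=
  MvPolynomial.aeval ![C X, X]

@[simp] theorem invHom_X_zero : invHom K L (MvPolynomial.X 0) = C X := by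
  simp [invHom]

@[simp] theorem invHom_X_one : invHom K L (MvPolynomial.X 1) = X := by
  simp [invHom]

/-- An augmentation `K[k^{±1}] → K` induces a left inverse of `K[c, z] → K[c, k^{±1}][z]`. -/
theorem invHom_injective (hτ : IsLaurent K τ) : Function.Injective (invHom K L) := by
  obtain ⟨ε⟩ := hτ.augmentation
  let ρ : L[X][X] →+* MvPolynomial (Fin 2) K :=
    Polynomial.eval₂RingHom (Polynomial.eval₂RingHom
      (MvPolynomial.C.comp (ε : L →+* K)) (MvPolynomial.X 0)) (MvPolynomial.X 1)
  have h1 : ρ.comp (invHom K L : MvPolynomial (Fin 2) K →+* L[X][X]) = RingHom.id _ := by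
    apply MvPolynomial.ringHom_ext
    · intro t
      have : algebraMap K L[X][X] t = C (C (algebraMap K L t)) := rfl
      simp only [RingHom.comp_apply, RingHom.coe_coe, MvPolynomial.algHom_C, this]
      simp [ρ]
    · intro i
      fin_cases i
      · simp [ρ]
      · simp [ρ]
  exact Function.LeftInverse.injective (g := ρ) fun p => RingHom.congr_fun h1 p

/-- Every element of `K[c, k^{±1}][z]` is a Laurent polynomial in `k` over `K[c, z]`. -/
theorem exists_laurent_expansion (hτ : IsLaurent K τ) (b : L[X][X]) :
    ∃ G : ℤ →₀ MvPolynomial (Fin 2) K, b = G.sum fun e p => invHom K L p * C (C (τ e)) := by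
  have hadd : ∀ b₁ b₂ : L[X][X],
      (∃ G : ℤ →₀ MvPolynomial (Fin 2) K, b₁ = G.sum fun e p => invHom K L p * C (C (τ e))) →
      (∃ G : ℤ →₀ MvPolynomial (Fin 2) K, b₂ = G.sum fun e p => invHom K L p * C (C (τ e))) →
      ∃ G : ℤ →₀ MvPolynomial (Fin 2) K,
        b₁ + b₂ = G.sum fun e p => invHom K L p * C (C (τ e)) := by
    rintro _ _ ⟨G₁, rfl⟩ ⟨G₂, rfl⟩
    exact ⟨G₁ + G₂, by
      rw [Finsupp.sum_add_index' (by simp) (by intros; simp [add_mul])]⟩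
  induction b using Polynomial.induction_on' with
  | add b₁ b₂ h₁ h₂ => exact hadd _ _ h₁ h₂
  | monomial m a =>
    induction a using Polynomial.induction_on' with
    | add a₁ a₂ h₁ h₂ => rw [map_add]; exact hadd _ _ h₁ h₂
    | monomial l c =>
      obtain ⟨g, rfl⟩ := Finsupp.mem_span_range_iff_exists_finsupp.1 (hτ.span c)
      induction g using Finsupp.induction_linear with
      | zero => exact ⟨0, by simp⟩
      | add g₁ g₂ h₁ h₂ =>
        rw [Finsupp.sum_add_index' (by simp) (by intros; rw [add_smul]), map_add, map_add]
        exact hadd _ _ h₁ h₂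
      | single e t =>
        refine ⟨Finsupp.single e
          (MvPolynomial.C t * MvPolynomial.X 0 ^ l * MvPolynomial.X 1 ^ m), ?_⟩
        have h1 : algebraMap K L[X][X] t = C (C (algebraMap K L t)) := rfl
        rw [Finsupp.sum_single_index (by simp), Finsupp.sum_single_index (by simp),
          ← C_mul_X_pow_eq_monomial, ← C_mul_X_pow_eq_monomial, Algebra.smul_def]
        simp only [map_mul, map_pow, invHom_X_zero, invHom_X_one, MvPolynomial.algHom_C, h1]
        ring

theorem IsLaurent.isUnit (hτ : IsLaurent K τ) (e : ℤ) : IsUnit (τ e) :=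
  IsUnit.of_mul_eq_one (τ (-e)) (by rw [← hτ.add, add_neg_cancel, hτ.zero])

variable {q : K} {α : L[X] ≃ₐ[K] L[X]}

theorem alpha_T (hτ : IsLaurent K τ) (hq0 : q ≠ 0)
    (hαk : α (C (τ 1)) = algebraMap K L[X] (q ^ 2) * C (τ 1))
    (e : ℤ) : α (C (τ e)) = (q ^ 2) ^ e • C (τ e) := by
  have hq2 : q ^ 2 ≠ 0 := pow_ne_zero 2 hq0
  have hT : ∀ a b : ℤ, (C (τ (a + b)) : L[X]) = C (τ a) * C (τ b) := fun a b => by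
    rw [hτ.add, map_mul]
  rw [← Algebra.smul_def] at hαk
  induction e using Int.induction_on with
  | zero => simp [hτ.zero]
  | succ i ih =>
    rw [hT, map_mul, ih, hαk, smul_mul_smul_comm, zpow_add_one₀ hq2]
  | pred i ih =>
    have h1 : α (C (τ (-(i : ℤ) - 1))) * α (C (τ 1)) = (q ^ 2) ^ (-(i : ℤ)) • C (τ (-(i : ℤ))) := by
      rw [← map_mul, ← hT, sub_add_cancel, ih]
    have hu : IsUnit (α (C (τ 1))) := ((hτ.isUnit 1).map C).map α
    refine hu.mul_right_cancel ?_
    rw [h1, hαk, smul_mul_smul_comm, ← hT, ← zpow_add_one₀ hq2, sub_add_cancel]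

theorem q_zpow_injective (hq0 : q ≠ 0) (hq : ∀ n : ℕ, 0 < n → q ^ n ≠ 1) :
    Function.Injective fun e : ℤ => (q ^ 2) ^ e := by
  have key : ∀ e : ℤ, 0 < e → (q ^ 2) ^ e ≠ 1 := fun e he h => by
    lift e to ℕ using he.le
    rw [zpow_natCast, ← pow_mul] at h
    exact hq _ (by omega) h
  have hq2 : q ^ 2 ≠ 0 := pow_ne_zero 2 hq0
  intro a b hab
  dsimp only at hab
  rcases lt_trichotomy a b with h | h | h
  · exact absurd (by rw [zpow_sub₀ hq2, hab, div_self (zpow_ne_zero _ hq2)])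
      (key (b - a) (sub_pos.2 h))
  · exact h
  · exact absurd (by rw [zpow_sub₀ hq2, hab, div_self (zpow_ne_zero _ hq2)])
      (key (a - b) (sub_pos.2 h))

theorem extAut_invHom (hαc : α X = X) (p : MvPolynomial (Fin 2) K) :
    extAut α (invHom K L p) = invHom K L p := by
  have : ((extAut α : L[X][X] ≃ₐ[K] L[X][X]).toAlgHom.comp (invHom K L)) = invHom K L := by
    apply MvPolynomial.algHom_ext
    intro i
    fin_cases i
    · simp [hαc]
    · simp
  exact DFunLike.congr_fun this p

theorem extAut_laurent_term (hτ : IsLaurent K τ) (hq0 : q ≠ 0)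
    (hαk : α (C (τ 1)) = algebraMap K L[X] (q ^ 2) * C (τ 1)) (hαc : α X = X)
    (p : MvPolynomial (Fin 2) K) (e : ℤ) :
    extAut α (invHom K L p * C (C (τ e))) = (q ^ 2) ^ e • (invHom K L p * C (C (τ e))) := by
  rw [map_mul, extAut_invHom hαc, extAut_C, alpha_T hτ hq0 hαk, ← smul_C, mul_smul_comm]

/-- A nonzero ideal of `K[c, k^{±1}][z]` stable under `α` meets `K[c, z]`. -/
theorem exists_invHom_mem (hτ : IsLaurent K τ) (hq0 : q ≠ 0) (hq : ∀ n : ℕ, 0 < n → q ^ n ≠ 1)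
    (hαk : α (C (τ 1)) = algebraMap K L[X] (q ^ 2) * C (τ 1)) (hαc : α X = X)
    (J : Ideal L[X][X]) (hJ : ∀ b ∈ J, extAut α b ∈ J) (hJ0 : J ≠ ⊥) :
    ∃ p, p ≠ 0 ∧ invHom K L p ∈ J := by
  obtain ⟨b, hb, hb0⟩ := Submodule.exists_mem_ne_zero_of_ne_bot hJ0
  obtain ⟨G, rfl⟩ := exists_laurent_expansion hτ b
  have h1 := mem_of_sum_eigenvectors_mem (extAut α).toLinearMap (J.restrictScalars K) hJ
    (fun e : ℤ => (q ^ 2) ^ e) (q_zpow_injective hq0 hq) G.support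
    (fun e => invHom K L (G e) * C (C (τ e)))
    (fun e => extAut_laurent_term hτ hq0 hαk hαc _ e) hb
  have hG : G ≠ 0 := by rintro rfl; simp at hb0
  obtain ⟨e, he⟩ := Finsupp.support_nonempty_iff.2 hG
  refine ⟨G e, Finsupp.mem_support_iff.1 he, ?_⟩
  have h2 := J.mul_mem_right (C (C (τ (-e)))) (h1 e he)
  rwa [mul_assoc, ← map_mul, ← map_mul, ← hτ.add, add_neg_cancel, hτ.zero, map_one, map_one,
    mul_one] at h2

/-- The fixed ring of `α` on `K[c, k^{±1}][z]` is `K[c, z]`. -/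
theorem exists_invHom_eq (hτ : IsLaurent K τ) (hq0 : q ≠ 0) (hq : ∀ n : ℕ, 0 < n → q ^ n ≠ 1)
    (hαk : α (C (τ 1)) = algebraMap K L[X] (q ^ 2) * C (τ 1)) (hαc : α X = X)
    (b : L[X][X]) (hb : extAut α b = b) : ∃ p, b = invHom K L p := by
  obtain ⟨G, rfl⟩ := exists_laurent_expansion hτ b
  have h1 := eq_zero_of_sum_eigenvectors_fixed (extAut α).toLinearMap
    (fun e : ℤ => (q ^ 2) ^ e) (q_zpow_injective hq0 hq) G.support
    (fun e => invHom K L (G e) * C (C (τ e)))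
    (fun e => extAut_laurent_term hτ hq0 hαk hαc _ e) hb
  refine ⟨G 0, ?_⟩
  rw [Finsupp.sum, Finset.sum_eq_single 0]
  · simp [hτ.zero]
  · intro e he he0
    exact h1 e he fun h => he0 (q_zpow_injective hq0 hq (by simpa using h))
  · intro h
    rw [Finsupp.notMem_support_iff.1 h]; simp

theorem exists_alpha_C (hτ : IsLaurent K τ) (hq0 : q ≠ 0)
    (hαk : α (C (τ 1)) = algebraMap K L[X] (q ^ 2) * C (τ 1)) (f : L) :
    ∃ f', α (C f) = C f' := by
  induction hτ.span f using Submodule.span_induction with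
  | zero => exact ⟨0, by simp⟩
  | add f₁ f₂ _ _ h₁ h₂ =>
    obtain ⟨f₁', h₁⟩ := h₁
    obtain ⟨f₂', h₂⟩ := h₂
    exact ⟨f₁' + f₂', by rw [map_add, map_add, h₁, h₂, map_add]⟩
  | smul t f _ h =>
    obtain ⟨f', h⟩ := h
    exact ⟨t • f', by rw [← smul_C, map_smul, h, smul_C]⟩
  | mem f hf =>
    obtain ⟨e, rfl⟩ := hf
    exact ⟨(q ^ 2) ^ e • τ e, by rw [alpha_T hτ hq0 hαk, smul_C]⟩

theorem iterate_alpha_u (hτ : IsLaurent K τ) (hq0 : q ≠ 0)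
    (hαk : α (C (τ 1)) = algebraMap K L[X] (q ^ 2) * C (τ 1)) (hαc : α X = X)
    (n : ℤ) (f : L) (i : ℕ) :
    ∃ f', (⇑α)^[i] (X * C (τ n) + C f) = ((q ^ 2) ^ n) ^ i • (X * C (τ n)) + C f' := by
  induction i with
  | zero => exact ⟨f, by simp⟩
  | succ i ih =>
    obtain ⟨f', hf'⟩ := ih
    obtain ⟨f'', hf''⟩ := exists_alpha_C hτ hq0 hαk f'
    refine ⟨f'', ?_⟩
    rw [Function.iterate_succ_apply', hf', map_add, hf'', map_smul, map_mul, hαc,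
      alpha_T hτ hq0 hαk, mul_smul_comm, smul_smul, pow_succ ((q ^ 2) ^ n)]

/-- For `i ≥ 1`, the ideal of `K[c, k^{±1}][z]` generated by `z + u` and `z + αⁱ(u)` contains a
nonzero element of `K[c, z]`: modulo this ideal, `c` and `z` are Laurent polynomials in `k`, and two
of these are always algebraically dependent. -/
theorem exists_invHom_mem_span (hτ : IsLaurent K τ) (hq0 : q ≠ 0)
    (hq : ∀ n : ℕ, 0 < n → q ^ n ≠ 1)
    (hαk : α (C (τ 1)) = algebraMap K L[X] (q ^ 2) * C (τ 1)) (hαc : α X = X)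
    (n : ℤ) (hn : n ≠ 0) (f : L) (u : L[X]) (hu : u = X * C (τ n) + C f)
    (i : ℕ) (hi : 0 < i) :
    ∃ p, p ≠ 0 ∧ invHom K L p ∈
      (Ideal.span {X + C u, X + C ((⇑α)^[i] u)} : Ideal L[X][X]) := by
  obtain ⟨f', hf'⟩ := iterate_alpha_u hτ hq0 hαk hαc n f i
  rw [← hu] at hf'
  set I : Ideal L[X][X] := Ideal.span {X + C u, X + C ((⇑α)^[i] u)} with hI
  set t : K := 1 - ((q ^ 2) ^ n) ^ i with ht
  have ht0 : t ≠ 0 := by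
    rw [ht, sub_ne_zero, ← zpow_natCast, ← zpow_mul]
    intro h
    have : n * i = 0 := q_zpow_injective hq0 hq (a₁ := n * i) (a₂ := 0) (by simpa using h.symm)
    rcases mul_eq_zero.1 this with h | h
    · exact hn h
    · omega
  -- `g` and `w` are the values of `c` and `z` modulo the ideal.
  set g : L := t⁻¹ • (τ (-n) * (f' - f)) with hg
  set w : L := -(g * τ n + f) with hw
  obtain ⟨p, hp0, hp⟩ := hτ.dependent g w
  refine ⟨p, hp0, ?_⟩
  have m1 : X + C u ∈ I := Ideal.subset_span (by simp)
  have m2 : X + C ((⇑α)^[i] u) ∈ I := Ideal.subset_span (by simp)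
  have hc : C X - C (C g) ∈ I := by
    have h1 : (C X - C (C g) : L[X][X]) =
        C (t⁻¹ • C (τ (-n))) * ((X + C u) - (X + C ((⇑α)^[i] u))) := by
      rw [add_sub_add_left_eq_sub, ← map_sub, ← map_sub, ← map_mul]
      congr 1
      rw [hf', hu, hg]
      have h2 : X * C (τ n) + C f - (((q ^ 2) ^ n) ^ i • (X * C (τ n)) + C f') =
          t • (X * C (τ n)) - C (f' - f) := by
        rw [ht, sub_smul, one_smul, map_sub]; abel
      have h3 : (C (τ (-n)) * C (τ n) : L[X]) = 1 := by
        rw [← map_mul, ← hτ.add, neg_add_cancel, hτ.zero, map_one]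
      rw [h2, ← smul_C, map_mul, mul_sub, smul_mul_smul_comm, inv_mul_cancel₀ ht0, one_smul,
        smul_mul_assoc, mul_left_comm, h3, mul_one]
    rw [h1]
    exact I.mul_mem_left _ (I.sub_mem m1 m2)
  have hz : X - C (C w) ∈ I := by
    have h1 : (X - C (C w) : L[X][X]) = (X + C u) - C (C (τ n)) * (C X - C (C g)) := by
      rw [hw, hu]; simp only [map_add, map_mul, map_neg]; ring
    rw [h1]
    exact I.sub_mem m1 (I.mul_mem_left _ hc)
  have h2 : (Ideal.Quotient.mkₐ K I).comp (invHom K L) =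
      ((Ideal.Quotient.mkₐ K I).comp
        ((CAlgHom (R := K) (A := L[X])).comp (CAlgHom (R := K) (A := L)))).comp
          (MvPolynomial.aeval ![g, w]) := by
    apply MvPolynomial.algHom_ext
    intro j
    fin_cases j
    · simpa using Ideal.Quotient.mk_eq_mk_iff_sub_mem _ _ |>.2 hc
    · simpa using Ideal.Quotient.mk_eq_mk_iff_sub_mem _ _ |>.2 hz
  have h3 := DFunLike.congr_fun h2 p
  rw [AlgHom.comp_apply, AlgHom.comp_apply, hp, map_zero] at h3
  exact Ideal.Quotient.eq_zero_iff_mem.1 h3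

end Laurent

/-! ### The centre and the two-sided ideals of `R` -/

section Centre

open Polynomial

variable {K L R : Type*} [Field K] [CommRing L] [Algebra K L] [Ring R] [Algebra K R]
  {τ : ℤ → L} {q : K} {α : L[X] ≃ₐ[K] L[X]} {u : L[X]} {ι : L[X] →ₐ[K] R} {x y : R}

theorem mvEval_eq (h : IsAmbiskew α u ι x y) (p : MvPolynomial (Fin 2) K) :
    mvEval (K := K) ![ι X, x * y - ι u] p = casimirHom h (invHom K L p) := by
  conv_rhs => rw [p.as_sum]
  rw [map_sum, map_sum, mvEval]
  refine Finset.sum_congr rfl fun d _ => ?_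
  have h1 : (MvPolynomial.monomial d (MvPolynomial.coeff d p) : MvPolynomial (Fin 2) K) =
      MvPolynomial.C (MvPolynomial.coeff d p) *
        (MvPolynomial.X 0 ^ d 0 * MvPolynomial.X 1 ^ d 1) := by
    rw [MvPolynomial.monomial_eq, Finsupp.prod_fintype _ _ (by simp), Fin.prod_univ_two]
  rw [h1, ← MvPolynomial.algebraMap_eq]
  have h2 := ι.commutes (MvPolynomial.coeff d p)
  rw [show algebraMap K L[X] (MvPolynomial.coeff d p) =
    C (algebraMap K L (MvPolynomial.coeff d p)) from rfl] at h2
  simp [List.finRange_succ, h2]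

theorem casimirHom_injective [Nontrivial L] (h : IsAmbiskew α u ι x y) :
    Function.Injective (casimirHom h) := by
  rw [injective_iff_map_eq_zero]
  intro b hb
  exact eq_zero_of_mul_y_pow h 0 b (by simpa using hb)

theorem casimirHom_invHom_central [Nontrivial L] (h : IsAmbiskew α u ι x y) (hαc : α X = X)
    (p : MvPolynomial (Fin 2) K) (r : R) :
    casimirHom h (invHom K L p) * r = r * casimirHom h (invHom K L p) := by
  set s := casimirHom h (invHom K L p) with hs
  have hy : Commute s y := by
    have := y_mul h (invHom K L p)
    rw [extAut_invHom hαc] at this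
    exact this.symm
  have hx : Commute s x := by
    have := x_mul h (invHom K L p)
    rw [(AlgEquiv.symm_apply_eq _).2 (extAut_invHom hαc p).symm] at this
    exact this.symm
  have hb : ∀ b, Commute s (casimirHom h b) := fun b => by
    rw [commute_iff_eq, hs, ← map_mul, mul_comm, map_mul]
  obtain ⟨F, rfl⟩ := exists_gwa_expansion h r
  refine Commute.sum_right _ _ _ fun d _ => (hb _).mul_right ?_
  rw [gwaMon]
  split_ifs
  · exact hy.pow_right _
  · exact hx.pow_right _

/-- Conjugation by the unit `k` of `R`. -/
def conjK (K : Type*) [Field K] [Algebra K L] [Algebra K R] (ι : L[X] →ₐ[K] R) (τ : ℤ → L) :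
    R →ₗ[K] R :=
  LinearMap.mulLeftRight K (ι (C (τ 1)), ι (C (τ (-1))))

theorem conjK_apply (r : R) : conjK K ι τ r = ι (C (τ 1)) * r * ι (C (τ (-1))) := by
  simp [conjK]

/-- The terms of degree `d` in `R` are eigenvectors of conjugation by `k`, with eigenvalue
`(q ^ 2) ^ (-d)`. -/
theorem conjK_term [Nontrivial L] (h : IsAmbiskew α u ι x y) (hτ : IsLaurent K τ) (hq0 : q ≠ 0)
    (hαk : α (C (τ 1)) = algebraMap K L[X] (q ^ 2) * C (τ 1)) (b : L[X][X]) (d : ℤ) :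
    conjK K ι τ (casimirHom h b * gwaMon x y d) =
      (q ^ 2) ^ (-d) • (casimirHom h b * gwaMon x y d) := by
  have hq2 : q ^ 2 ≠ 0 := pow_ne_zero 2 hq0
  have h1 : (C (τ 1) * C (τ (-1)) : L[X]) = 1 := by
    rw [← map_mul, ← hτ.add, add_neg_cancel, hτ.zero, map_one]
  have hy : y * ι (C (τ (-1))) = (q ^ 2) ^ (-1 : ℤ) • (ι (C (τ (-1))) * y) := by
    rw [h.ya, alpha_T hτ hq0 hαk, map_smul, smul_mul_assoc]
  have hx : x * ι (C (τ (-1))) = (q ^ 2) ^ (1 : ℤ) • (ι (C (τ (-1))) * x) := by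
    have h2 : α.symm (C (τ (-1))) = (q ^ 2) ^ (1 : ℤ) • C (τ (-1)) := by
      rw [AlgEquiv.symm_apply_eq, map_smul, alpha_T hτ hq0 hαk, smul_smul, ← zpow_add₀ hq2]
      simp
    rw [h.xa, h2, map_smul, smul_mul_assoc]
  have hpow : ∀ (w : R) (t : K), w * ι (C (τ (-1))) = t • (ι (C (τ (-1))) * w) →
      ∀ i : ℕ, w ^ i * ι (C (τ (-1))) = t ^ i • (ι (C (τ (-1))) * w ^ i) := by
    intro w t hw i
    induction i with
    | zero => simp
    | succ i ih =>
      rw [pow_succ, mul_assoc, hw, mul_smul_comm, ← mul_assoc, ih, smul_mul_assoc, smul_smul,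
        mul_assoc, pow_succ' t]
  have hd : gwaMon x y d * ι (C (τ (-1))) =
      (q ^ 2) ^ (-d) • (ι (C (τ (-1))) * gwaMon x y d) := by
    rw [gwaMon]
    split_ifs with h0
    · rw [hpow _ _ hy, ← zpow_natCast, ← zpow_mul, Int.toNat_of_nonneg h0, neg_one_mul]
    · rw [hpow _ _ hx, ← zpow_natCast, ← zpow_mul, Int.toNat_of_nonneg (by omega), one_mul]
  have hk : ι (C (τ 1)) * casimirHom h b * ι (C (τ (-1))) = casimirHom h b := by
    rw [← casimirHom_C h, ← casimirHom_C h, ← map_mul, ← map_mul, mul_right_comm, ← map_mul, h1,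
      map_one, one_mul]
  calc conjK K ι τ (casimirHom h b * gwaMon x y d)
      = ι (C (τ 1)) * casimirHom h b * (gwaMon x y d * ι (C (τ (-1)))) := by
        rw [conjK_apply]; simp only [mul_assoc]
    _ = _ := by rw [hd, mul_smul_comm, ← mul_assoc, hk]

theorem q_zpow_neg_injective (hq0 : q ≠ 0) (hq : ∀ n : ℕ, 0 < n → q ^ n ≠ 1) :
    Function.Injective fun e : ℤ => (q ^ 2) ^ (-e) :=
  (q_zpow_injective hq0 hq).comp neg_injective

/-- A central element commutes with `k`, hence lies in `K[c, k^{±1}][z]`; it commutes with `y`,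
hence is fixed by `α`. -/
theorem exists_eq_of_central [Nontrivial L] (h : IsAmbiskew α u ι x y) (hτ : IsLaurent K τ)
    (hq0 : q ≠ 0) (hq : ∀ n : ℕ, 0 < n → q ^ n ≠ 1)
    (hαk : α (C (τ 1)) = algebraMap K L[X] (q ^ 2) * C (τ 1)) (hαc : α X = X)
    (r : R) (hr : ∀ w, r * w = w * r) : ∃ p, r = casimirHom h (invHom K L p) := by
  have hg : conjK K ι τ r = r := by
    rw [conjK_apply, ← hr, mul_assoc, ← map_mul, ← map_mul, ← hτ.add, add_neg_cancel, hτ.zero,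
      map_one, map_one, mul_one]
  obtain ⟨F, hF⟩ := exists_gwa_expansion h r
  have h0 : r = casimirHom h (F 0) := by
    rw [hF] at hg
    have h1 := eq_zero_of_sum_eigenvectors_fixed (conjK K ι τ) (fun e : ℤ => (q ^ 2) ^ (-e))
      (q_zpow_neg_injective hq0 hq) F.support (fun d => casimirHom h (F d) * gwaMon x y d)
      (fun d => conjK_term h hτ hq0 hαk _ _) hg
    rw [hF, Finsupp.sum, Finset.sum_eq_single 0]
    · simp [gwaMon]
    · intro d hd hd0
      exact h1 d hd fun h => hd0 (q_zpow_neg_injective hq0 hq (by simpa using h))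
    · intro hd
      rw [Finsupp.notMem_support_iff.1 hd]; simp
  have h2 : extAut α (F 0) = F 0 := by
    rw [← sub_eq_zero]
    apply eq_zero_of_mul_y_pow h 1
    rw [pow_one, map_sub, sub_mul, ← y_mul, ← h0, hr, sub_self]
  obtain ⟨p, hp⟩ := exists_invHom_eq hτ hq0 hq hαk hαc _ h2
  exact ⟨p, by rw [h0, hp]⟩

/-- The coefficients `b` such that `b·yⁱ` lies in the two-sided ideal `T` for some `i`. -/
def yCoeffIdeal (h : IsAmbiskew α u ι x y) (T : TwoSidedIdeal R) : Ideal L[X][X] where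
  carrier := {b | ∃ i, casimirHom h b * y ^ i ∈ T}
  zero_mem' := ⟨0, by rw [map_zero, zero_mul]; exact T.zero_mem⟩
  add_mem' := by
    rintro a b ⟨i, hi⟩ ⟨j, hj⟩
    refine ⟨i + j, ?_⟩
    rw [map_add, add_mul]
    refine T.add_mem ?_ ?_
    · rw [pow_add, ← mul_assoc]; exact T.mul_mem_right _ _ hi
    · rw [add_comm, pow_add, ← mul_assoc]; exact T.mul_mem_right _ _ hj
  smul_mem' := by
    rintro a b ⟨i, hi⟩
    exact ⟨i, by rw [smul_eq_mul, map_mul, mul_assoc]; exact T.mul_mem_left _ _ hi⟩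

theorem extAut_mem_yCoeffIdeal (h : IsAmbiskew α u ι x y) (T : TwoSidedIdeal R) (b : L[X][X])
    (hb : b ∈ yCoeffIdeal h T) : extAut α b ∈ yCoeffIdeal h T := by
  obtain ⟨i, hi⟩ := hb
  refine ⟨i + 1, ?_⟩
  have h1 := T.mul_mem_left y _ hi
  rwa [← mul_assoc, y_mul, mul_assoc, ← pow_succ'] at h1

/-- A nonzero ideal contains a nonzero homogeneous element, which right multiplication by a power
of `y` brings into nonnegative degree. -/
theorem yCoeffIdeal_ne_bot [IsDomain L] (h : IsAmbiskew α u ι x y) (hτ : IsLaurent K τ)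
    (hq0 : q ≠ 0) (hq : ∀ n : ℕ, 0 < n → q ^ n ≠ 1)
    (hαk : α (C (τ 1)) = algebraMap K L[X] (q ^ 2) * C (τ 1))
    (T : TwoSidedIdeal R) (r : R) (hr : r ∈ T) (hr0 : r ≠ 0) : yCoeffIdeal h T ≠ ⊥ := by
  obtain ⟨F, rfl⟩ := exists_gwa_expansion h r
  let N : Submodule K R :=
    { carrier := {r | r ∈ T}
      zero_mem' := T.zero_mem
      add_mem' := T.add_mem
      smul_mem' := fun t r hr => by
        rw [Algebra.smul_def]; exact T.mul_mem_left _ _ hr }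
  have h1 := mem_of_sum_eigenvectors_mem (conjK K ι τ) N
    (fun v hv => by
      rw [conjK_apply]; exact T.mul_mem_right _ _ (T.mul_mem_left _ _ hv))
    (fun e : ℤ => (q ^ 2) ^ (-e))
    (q_zpow_neg_injective hq0 hq) F.support (fun d => casimirHom h (F d) * gwaMon x y d)
    (fun d => conjK_term h hτ hq0 hαk _ _) hr
  have hF : F ≠ 0 := by rintro rfl; simp at hr0
  obtain ⟨d, hd⟩ := Finsupp.support_nonempty_iff.2 hF
  have h2 : casimirHom h (F d) * gwaMon x y d ∈ T := h1 d hd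
  have hd0 : F d ≠ 0 := Finsupp.mem_support_iff.1 hd
  rw [gwaMon] at h2
  split_ifs at h2 with h3
  · exact fun h4 => hd0 ((Submodule.mem_bot _).1 (h4 ▸ (show F d ∈ yCoeffIdeal h T from ⟨_, h2⟩)))
  · obtain ⟨D, hD, hD'⟩ := exists_x_pow_mul_y_pow h (-d).toNat
    have h5 : F d * D ∈ yCoeffIdeal h T := by
      refine ⟨0, ?_⟩
      rw [pow_zero, mul_one, map_mul, ← hD', ← mul_assoc]
      exact T.mul_mem_right _ _ h2
    intro h4
    rw [h4] at h5
    exact mul_ne_zero hd0 hD.ne_zero ((Submodule.mem_bot _).1 h5)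

/-- From a nonzero `p ∈ K[c, z]` with `p·yⁱ ∈ T`, the power of `y` is removed step by step:
`p·yⁱ·x` and `x·p·yⁱ` are `p·(z + αⁱ(u))·yⁱ⁻¹` and `p·(z + u)·yⁱ⁻¹`. -/
theorem exists_central_mem_of_mul_y_pow (h : IsAmbiskew α u ι x y) (hτ : IsLaurent K τ)
    (hq0 : q ≠ 0) (hq : ∀ n : ℕ, 0 < n → q ^ n ≠ 1)
    (hαk : α (C (τ 1)) = algebraMap K L[X] (q ^ 2) * C (τ 1)) (hαc : α X = X)
    (n : ℤ) (hn : n ≠ 0) (f : L) (hu : u = X * C (τ n) + C f)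
    (T : TwoSidedIdeal R) (i : ℕ) (p : MvPolynomial (Fin 2) K) (hp0 : p ≠ 0)
    (hp : casimirHom h (invHom K L p) * y ^ i ∈ T) :
    ∃ p, p ≠ 0 ∧ casimirHom h (invHom K L p) ∈ T := by
  induction i generalizing p with
  | zero => exact ⟨p, hp0, by simpa using hp⟩
  | succ i ih =>
    have h1 : casimirHom h (invHom K L p * (X + C ((⇑α)^[i + 1] u))) * y ^ i ∈ T := by
      have h2 := T.mul_mem_right _ x hp
      have h3 : y ^ (i + 1) * x = casimirHom h (X + C ((⇑α)^[i + 1] u)) * y ^ i := by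
        rw [pow_succ, mul_assoc, yx_eq h, y_pow_mul, iterate_extAut_linear,
          Function.iterate_succ_apply]
      rwa [mul_assoc, h3, ← mul_assoc, ← map_mul] at h2
    have h2 : casimirHom h (invHom K L p * (X + C u)) * y ^ i ∈ T := by
      have h2 := T.mul_mem_left x _ hp
      rwa [← mul_assoc, x_mul, (AlgEquiv.symm_apply_eq _).2 (extAut_invHom hαc p).symm,
        mul_assoc, pow_succ', ← mul_assoc x, xy_eq h, ← mul_assoc, ← map_mul] at h2
    let J : Ideal L[X][X] :=
      { carrier := {b | casimirHom h (invHom K L p * b) * y ^ i ∈ T}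
        zero_mem' := by
          change _ ∈ T
          rw [mul_zero, map_zero, zero_mul]; exact T.zero_mem
        add_mem' := fun {a b} ha hb => by
          change _ ∈ T
          rw [mul_add, map_add, add_mul]; exact T.add_mem ha hb
        smul_mem' := fun a b hb => by
          change _ ∈ T
          rw [smul_eq_mul, mul_left_comm, map_mul, mul_assoc]
          exact T.mul_mem_left _ _ hb }
    obtain ⟨p', hp'0, hp'⟩ :=
      exists_invHom_mem_span hτ hq0 hq hαk hαc n hn f u hu (i + 1) i.succ_pos
    have h3 : Ideal.span {X + C u, X + C ((⇑α)^[i + 1] u)} ≤ J := by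
      rw [Ideal.span_le]
      rintro b (rfl | rfl)
      · exact h2
      · exact h1
    refine ih (p * p') (mul_ne_zero hp0 hp'0) ?_
    rw [map_mul]
    exact h3 hp'

theorem exists_central_mem [IsDomain L] (h : IsAmbiskew α u ι x y) (hτ : IsLaurent K τ)
    (hq0 : q ≠ 0) (hq : ∀ n : ℕ, 0 < n → q ^ n ≠ 1)
    (hαk : α (C (τ 1)) = algebraMap K L[X] (q ^ 2) * C (τ 1)) (hαc : α X = X)
    (n : ℤ) (hn : n ≠ 0) (f : L) (hu : u = X * C (τ n) + C f)
    (T : TwoSidedIdeal R) (r : R) (hr : r ∈ T) (hr0 : r ≠ 0) :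
    ∃ s : R, s ∈ T ∧ s ≠ 0 ∧ ∀ w, s * w = w * s := by
  obtain ⟨p, hp0, i, hp⟩ := exists_invHom_mem hτ hq0 hq hαk hαc (yCoeffIdeal h T)
    (extAut_mem_yCoeffIdeal h T) (yCoeffIdeal_ne_bot h hτ hq0 hq hαk T r hr hr0)
  obtain ⟨p', hp'0, hp'⟩ :=
    exists_central_mem_of_mul_y_pow h hτ hq0 hq hαk hαc n hn f hu T i p hp0 hp
  refine ⟨_, hp', fun h0 => hp'0 ?_, casimirHom_invHom_central h hαc p'⟩
  exact invHom_injective hτ (casimirHom_injective h (by simpa using h0))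

end Centre

/-! ### Central localization -/

theorem exists_mem_ne_zero_of_ne_bot {R : Type*} [Ring R] (T : TwoSidedIdeal R) (hT : T ≠ ⊥) :
    ∃ r ∈ T, r ≠ 0 := by
  by_contra! hcon
  refine hT (le_bot_iff.1 fun r hr => ?_)
  rw [hcon r hr]
  exact TwoSidedIdeal.zero_mem _

/-- If every nonzero ideal of `R` meets the centre, then inverting the nonzero central elements
gives a simple ring. -/
theorem isSimpleRing_of_isCentralLocalization {R C : Type*} [Ring R] [Ring C] (φ : R →+* C)
    (hφ : IsCentralLocalization {r : R | r ≠ 0 ∧ ∀ w : R, r * w = w * r} φ)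
    (hT : ∀ T : TwoSidedIdeal R, T ≠ ⊥ → ∃ r : R, r ∈ T ∧ r ≠ 0 ∧ ∀ w : R, r * w = w * r) :
    IsSimpleRing C := by
  have h10 : (1 : C) ≠ 0 := by
    rw [← map_one φ]
    intro h
    obtain ⟨s, hs, h1⟩ := (hφ.ker 1).1 h
    exact hs.1 (by simpa using h1)
  have : Nontrivial C := ⟨1, 0, h10⟩
  refine ⟨⟨fun N => or_iff_not_imp_left.2 fun hN => ?_⟩⟩
  obtain ⟨c, hc, hc0⟩ := exists_mem_ne_zero_of_ne_bot N hN
  obtain ⟨r, s, hs, hr⟩ := hφ.surj c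
  have hr0 : r ≠ 0 := by
    rintro rfl
    rw [map_zero] at hr
    exact hc0 ((hφ.isUnit s hs).mul_left_eq_zero.1 hr)
  have hrN : r ∈ N.comap φ := by
    rw [TwoSidedIdeal.mem_comap, ← hr]
    exact N.mul_mem_right _ _ hc
  obtain ⟨t, ht, ht0, htc⟩ := hT (N.comap φ) fun h => hr0 (by
    rw [h] at hrN; exact (TwoSidedIdeal.mem_bot R).1 hrN)
  obtain ⟨v, hv⟩ := hφ.isUnit t ⟨ht0, htc⟩
  rw [TwoSidedIdeal.mem_comap, ← hv] at ht
  refine (TwoSidedIdeal.one_mem_iff N).1 ?_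
  rw [← v.inv_mul]
  exact N.mul_mem_left _ _ ht

/-- Proposition 2.11 (with Example 2.10): for an augmented down-up algebra `R`, the centre
`Z(R)` is the polynomial algebra `K[c, z]`, every nonzero two-sided ideal of `R` has
nonzero intersection with `Z(R)`, and the localization of `R` at `Z(R) \ {0}` is simple. -/
theorem stmt5 {K R C : Type*} [Field K] [IsAlgClosed K] [Ring R] [Algebra K R] [Ring C]
    (q : K) (hq0 : q ≠ 0) (hq : ∀ n : ℕ, 0 < n → q ^ n ≠ 1)
    -- `A = K[c, k^{±1}]`, realized as polynomials in `c` over `K[k^{±1}]`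
    -- `k`, `c`, and the automorphism `α` with `α(k) = q²k`, `α(c) = c`
    (α : Polynomial (LaurentPolynomial K) ≃ₐ[K] Polynomial (LaurentPolynomial K))
    (hαk : α (Polynomial.C (LaurentPolynomial.T 1)) =
      algebraMap K (Polynomial (LaurentPolynomial K)) (q ^ 2) *
        Polynomial.C (LaurentPolynomial.T 1))
    (hαc : α Polynomial.X = Polynomial.X)
    -- `n` a nonzero integer and `f = Σ aᵢkⁱ` a Laurent polynomial with `a_n = 0`
    (n : ℤ) (hn : n ≠ 0)
    (f : LaurentPolynomial K)
    (hf : ∃ g : ℤ →₀ K, g n = 0 ∧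
      f = g.sum fun i a => LaurentPolynomial.C a * LaurentPolynomial.T i)
    -- `u = c·kⁿ + f(k)`
    (u : Polynomial (LaurentPolynomial K))
    (hu : u = Polynomial.X * Polynomial.C (LaurentPolynomial.T n) + Polynomial.C f)
    -- the ambiskew ring `R = R(A, α, u − α(u), 1)`
    (ι : Polynomial (LaurentPolynomial K) →ₐ[K] R) (x y : R) (hR : IsAmbiskew α u ι x y)
    -- the Casimir element `z = xy − u`
    (z : R) (hz : z = x * y - ι u)
    -- `φ : R →+* C` exhibits `C` as the localization of `R` at `Z(R) \ {0}`
    (φ : R →+* C)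
    (hφ : IsCentralLocalization {r : R | r ≠ 0 ∧ ∀ w : R, r * w = w * r} φ) :
    -- `Z(R) = K[c, z]` is a polynomial algebra
    (Function.Injective (mvEval (K := K) ![ι Polynomial.X, z]) ∧
      {r : R | ∀ w : R, r * w = w * r} = Set.range (mvEval (K := K) ![ι Polynomial.X, z])) ∧
    -- every nonzero two-sided ideal of `R` meets `Z(R)` nontrivially
    (∀ T : TwoSidedIdeal R, T ≠ ⊥ →
      ∃ r : R, r ∈ T ∧ r ≠ 0 ∧ (∀ w : R, r * w = w * r)) ∧
    -- the localization of `R` at `Z(R) \ {0}` is simple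
    IsSimpleRing C := by
  subst hz
  have hT : ∀ T : TwoSidedIdeal R, T ≠ ⊥ →
      ∃ r : R, r ∈ T ∧ r ≠ 0 ∧ (∀ w : R, r * w = w * r) := fun T hT => by
    obtain ⟨r, hr, hr0⟩ := exists_mem_ne_zero_of_ne_bot T hT
    exact exists_central_mem hR isLaurent_T hq0 hq hαk hαc n hn f hu T r hr hr0
  refine ⟨⟨?_, ?_⟩, hT, isSimpleRing_of_isCentralLocalization φ hφ hT⟩
  · intro p p' h
    rw [mvEval_eq hR, mvEval_eq hR] at h
    exact invHom_injective isLaurent_T (casimirHom_injective hR h)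
  · ext r
    constructor
    · intro hr
      obtain ⟨p, hp⟩ := exists_eq_of_central hR isLaurent_T hq0 hq hαk hαc r hr
      exact ⟨p, by rw [mvEval_eq hR, hp]⟩
    · rintro ⟨p, rfl⟩ w
      rw [mvEval_eq hR]
      exact casimirHom_invHom_central hR hαc p w
end
end
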